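/- For all integers k ≥ 1, s ≥ 0, r ≥ 0 with s odd, r even and s + r < k, GR_k((k−s−r)P3, sK3, rH3) = 4·5^((s−1)/2)·17^(r/2) + 1. -/

import Mathlib

open SimpleGraph

/-- A rainbow triangle in an edge-coloring of a complete graph: three distinct
vertices whose three pairwise edges receive three pairwise distinct colors. -/
def HasRainbowTriangle {n k : ℕ} (c : Fin n → Fin n → Fin k) : Prop :=
  ∃ u v w : Fin n, u ≠ v ∧ u ≠ w ∧ v ≠ w ∧
    c u v ≠ c u w ∧ c u v ≠ c v w ∧ c u w ≠ c v w

/-- A Gallai `k`-coloring of `K_n`: a symmetric edge-coloring with no rainbow triangle. -/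
def IsGallaiColoring {n k : ℕ} (c : Fin n → Fin n → Fin k) : Prop :=
  (∀ u v, c u v = c v u) ∧ ¬ HasRainbowTriangle c

/-- A monochromatic copy of the graph `F` in color `i`: an injection of the vertices
of `F` into the vertices of `K_n` mapping every edge of `F` to an edge colored `i`. -/
def HasMonoCopy {V : Type} (F : SimpleGraph V) {n k : ℕ}
    (c : Fin n → Fin n → Fin k) (i : Fin k) : Prop :=
  ∃ f : V → Fin n, Function.Injective f ∧ ∀ a b, F.Adj a b → c (f a) (f b) = i

/-- The Gallai-Ramsey number `GR(F₁, …, F_k)`: the least `n` such that every Gallai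
`k`-coloring of `K_n` contains, for some color `i`, a monochromatic copy of `Fᵢ`
in color `i`. -/
noncomputable def GR (k : ℕ) (F : Fin k → Σ V : Type, SimpleGraph V) : ℕ :=
  sInf {n : ℕ | ∀ c : Fin n → Fin n → Fin k, IsGallaiColoring c →
    ∃ i : Fin k, HasMonoCopy (F i).2 c i}

/-- The triangle `K₃`. -/
def GK3 : SimpleGraph (Fin 3) := ⊤

/-- The path `P₃` on three vertices (edges 0–1 and 1–2). -/
def GP3 : SimpleGraph (Fin 3) := SimpleGraph.fromRel (fun a _ => a = 1)

/-- `H₁`: a `K₄` on `{0,1,2,3}` together with the extra vertex `4` adjacent to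
exactly the vertex `3`. -/
def GH1 : SimpleGraph (Fin 5) :=
  SimpleGraph.fromRel (fun a b => (a ≠ 4 ∧ b ≠ 4) ∨ (a = 3 ∧ b = 4))

/-- `H₂`: `K₅` minus the two edges 0–1 and 1–2 of a path on three vertices. -/
def GH2 : SimpleGraph (Fin 5) :=
  (⊤ : SimpleGraph (Fin 5)) \
    SimpleGraph.fromRel (fun a b => (a = 0 ∧ b = 1) ∨ (a = 1 ∧ b = 2))

/-- `H₃`: `K₅` minus the edge 0–1. -/
def GH3 : SimpleGraph (Fin 5) :=
  (⊤ : SimpleGraph (Fin 5)) \ SimpleGraph.fromRel (fun a b => a = 0 ∧ b = 1)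
/-- The family of graphs for `GR_k((k-s-r)P₃, sK₃, rH₃)`: the graph `H₃` in each of
the first `r` colors, the triangle `K₃` in each of the next `s` colors, and the path
`P₃` in each of the remaining `k - s - r` colors. -/
def mixPKH (k s r : ℕ) : Fin k → Σ V : Type, SimpleGraph V :=
  fun i =>
    if (i : ℕ) < r then ⟨Fin 5, GH3⟩
    else if (i : ℕ) < r + s then ⟨Fin 3, GK3⟩
    else ⟨Fin 3, GP3⟩

section Gallai
open scoped Classical
variable {V K : Type*}

/-- No rainbow triangle, in positive form. -/
def NoRb (c : V → V → K) : Prop :=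
  ∀ u v w, u ≠ v → u ≠ w → v ≠ w → c u v = c u w ∨ c u v = c v w ∨ c u w = c v w

/-- the graph of color `i` on the set `S` -/
def colG (c : V → V → K) (hs : ∀ u v, c u v = c v u) (S : Finset V) (i : K) : SimpleGraph V where
  Adj u v := u ≠ v ∧ u ∈ S ∧ v ∈ S ∧ c u v = i
  symm := ⟨fun u v h => ⟨h.1.symm, h.2.2.1, h.2.1, by rw [hs]; exact h.2.2.2⟩⟩
  loopless := ⟨fun u h => h.1 rfl⟩

/-- color `i` is disconnected on `S` -/
def Disc (c : V → V → K) (S : Finset V) (i : K) : Prop :=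
  ∃ X ⊆ S, X.Nonempty ∧ (∃ y ∈ S, y ∉ X) ∧ ∀ u ∈ X, ∀ w ∈ S, w ∉ X → c u w ≠ i

theorem reach_mem {c : V → V → K} (hs : ∀ u v, c u v = c v u) {S : Finset V} {i : K} {x y : V}
    (hx : x ∈ S) (h : (colG c hs S i).Reachable x y) : y ∈ S := by
  rw [SimpleGraph.reachable_iff_reflTransGen] at h
  induction h with
  | refl => exact hx
  | tail _ h _ => exact h.2.2.1

theorem module_lem {c : V → V → K} (hs : ∀ u v, c u v = c v u) (hr : NoRb c) {S : Finset V} {i : K}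
    {x y z : V} (hx : x ∈ S) (hy : y ∈ S) (h : (colG c hs S i).Reachable y z)
    (hn : ¬ (colG c hs S i).Reachable y x) : c x y = c x z := by
  have h' := h
  rw [SimpleGraph.reachable_iff_reflTransGen] at h
  induction h with
  | refl => rfl
  | @tail b d h1 h2 ih =>
    have hb : (colG c hs S i).Reachable y b := by
      rw [SimpleGraph.reachable_iff_reflTransGen]; exact h1
    rw [ih hb]
    have hxb : x ≠ b := by rintro rfl; exact hn hb
    have hxd : x ≠ d := by rintro rfl; exact hn h'
    obtain ⟨hbd, hbS, hdS, hc⟩ := h2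
    have e1 : c x b ≠ i := fun h => hn (hb.trans (SimpleGraph.Adj.reachable
      ⟨hxb.symm, hbS, hx, by rw [hs]; exact h⟩))
    have e2 : c x d ≠ i := fun h => hn (h'.trans (SimpleGraph.Adj.reachable
      ⟨hxd.symm, hdS, hx, by rw [hs]; exact h⟩))
    rcases hr x b d hxb hxd hbd with h | h | h
    · exact h
    · exact absurd (h.trans hc) e1
    · exact absurd (h.trans hc) e2

theorem disc_nonreach {c : V → V → K} (hs : ∀ u v, c u v = c v u) {S : Finset V} {i : K}
    (h : Disc c S i) : ∃ x ∈ S, ∃ y ∈ S, ¬ (colG c hs S i).Reachable x y := by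
  obtain ⟨X, hXS, ⟨x, hx⟩, ⟨y, hyS, hyX⟩, hc⟩ := h
  refine ⟨x, hXS hx, y, hyS, fun hxy => hyX ?_⟩
  rw [SimpleGraph.reachable_iff_reflTransGen] at hxy
  clear hyX hyS
  induction hxy with
  | refl => exact hx
  | tail _ h ih =>
    by_contra hcon
    exact hc _ ih _ h.2.2.1 hcon h.2.2.2

theorem three_aux {c : V → V → K} (hs : ∀ u v, c u v = c v u) (hr : NoRb c) {S : Finset V} {v : V}
    (hv : v ∉ S) {a b g : K} (hab : a ≠ b) (hag : a ≠ g) (hbg : b ≠ g)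
    (hd : Disc c S g) (ha : ¬ Disc c (insert v S) a) (hb : ¬ Disc c (insert v S) b)
    (hg : ¬ Disc c (insert v S) g) : False := by
  obtain ⟨x0, hx0, y0, hy0, hxy⟩ := disc_nonreach hs hd
  -- v has an edge of each connected color
  have edge : ∀ i, ¬ Disc c (insert v S) i → ∃ y ∈ S, c v y = i := by
    intro i hi
    by_contra hcon
    push Not at hcon
    apply hi
    refine ⟨{v}, by simp, by simp, ⟨x0, by simp [hx0], ?_⟩, ?_⟩
    · simp; rintro rfl; exact hv hx0
    · intro u hu w hw hwv
      simp at hu hwv hw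
      subst hu
      rcases hw with hw | hw
      · exact absurd hw hwv
      · exact hcon w hw
  -- v has a g-edge to each component
  have comp : ∀ y ∈ S, ∃ x ∈ S, (colG c hs S g).Reachable y x ∧ c v x = g := by
    intro y hy
    by_contra hcon
    push Not at hcon
    apply hg
    refine ⟨S.filter (fun x => (colG c hs S g).Reachable y x), ?_, ⟨y, ?_⟩, ⟨v, by simp, ?_⟩, ?_⟩
    · exact (Finset.filter_subset _ _).trans (Finset.subset_insert _ _)
    · simp [hy]
    · simp [hv]
    · intro u hu w hw hwX
      simp only [Finset.mem_filter] at hu hwX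
      rcases Finset.mem_insert.1 hw with rfl | hw
      · intro h; rw [hs] at h; exact hcon u hu.1 hu.2 h
      · intro h
        apply hwX
        refine ⟨hw, hu.2.trans (SimpleGraph.Adj.reachable ⟨?_, hu.1, hw, h⟩)⟩
        rintro rfl
        exact hwX hu
  have key : ∀ y ∈ S, ∀ x ∈ S, c v y ≠ g → c v x = g → ¬ (colG c hs S g).Reachable y x →
      c x y = c v y := by
    intro y hy x hx h1 h2 h3
    have hvx : v ≠ x := by rintro rfl; exact hv hx
    have hvy : v ≠ y := by rintro rfl; exact hv hy
    have hxy : x ≠ y := by rintro rfl; exact h3 (SimpleGraph.Reachable.refl _)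
    rcases hr v x y hvx hvy hxy with h | h | h
    · exact absurd (h.symm.trans h2) h1
    · exfalso
      apply h3
      apply SimpleGraph.Adj.reachable
      refine ⟨hxy.symm, hy, hx, ?_⟩
      rw [hs, ← h, h2]
    · exact h.symm
  obtain ⟨y, hy, hya⟩ := edge a ha
  obtain ⟨y', hy', hyb⟩ := edge b hb
  by_cases hr' : (colG c hs S g).Reachable y y'
  · -- same component
    have : ∃ z ∈ S, ¬ (colG c hs S g).Reachable y z := by
      by_contra hcon
      push Not at hcon
      exact hxy ((hcon x0 hx0).symm.trans (hcon y0 hy0))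
    obtain ⟨z, hz, hyz⟩ := this
    obtain ⟨x, hx, hzx, hvx⟩ := comp z hz
    have n1 : ¬ (colG c hs S g).Reachable y x := fun h => hyz (h.trans hzx.symm)
    have n2 : ¬ (colG c hs S g).Reachable y' x := fun h => n1 (hr'.trans h)
    have e1 := key y hy x hx (by rw [hya]; exact hag) hvx n1
    have e2 := key y' hy' x hx (by rw [hyb]; exact hbg) hvx n2
    have e3 := module_lem hs hr hx hy hr' n1
    exact hab (by rw [← hya, ← hyb, ← e1, ← e2, e3])
  · obtain ⟨x, hx, hyx, hvx⟩ := comp y hy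
    obtain ⟨x', hx', hyx', hvx'⟩ := comp y' hy'
    have n1 : ¬ (colG c hs S g).Reachable y' x := fun h => hr' (hyx.trans h.symm)
    have n2 : ¬ (colG c hs S g).Reachable y x' := fun h => hr' (h.trans hyx'.symm)
    have e1 := key y' hy' x hx (by rw [hyb]; exact hbg) hvx n1
    have e2 := key y hy x' hx' (by rw [hya]; exact hag) hvx' n2
    have e3 := module_lem hs hr hy' hy hyx hr'
    have e4 := module_lem hs hr hy hy' hyx' (fun h => hr' h.symm)
    apply hab
    rw [← hya, ← hyb, ← e1, ← e2, hs x y', ← e3, hs x' y, ← e4, hs]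

theorem three_col {c : V → V → K} (hs : ∀ u v, c u v = c v u) (hr : NoRb c) {a b g : K}
    (hab : a ≠ b) (hag : a ≠ g) (hbg : b ≠ g) (S : Finset V) (h2 : 2 ≤ S.card) :
    Disc c S a ∨ Disc c S b ∨ Disc c S g := by
  induction S using Finset.induction_on with
  | empty => simp at h2
  | @insert v S hv ih =>
    rw [Finset.card_insert_of_notMem hv] at h2
    by_contra hcon
    push Not at hcon
    obtain ⟨ha, hb, hg⟩ := hcon
    by_cases hS : 2 ≤ S.card
    · rcases ih hS with h | h | h
      · exact three_aux hs hr hv hbg hab.symm hag.symm h hb hg ha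
      · exact three_aux hs hr hv hag hab hbg.symm h ha hg hb
      · exact three_aux hs hr hv hab hag hbg h ha hb hg
    · obtain ⟨x, rfl⟩ := Finset.card_eq_one.1 (show S.card = 1 by omega)
      have hvx : v ≠ x := by simpa using hv
      have : ∀ i, ¬ Disc c (insert v {x}) i → c v x = i := by
        intro i hi
        by_contra hcon
        apply hi
        refine ⟨{v}, by simp, by simp, ⟨x, by simp, by simpa using hvx.symm⟩, ?_⟩
        intro u hu w hw hwv
        simp at hu hw hwv
        subst hu
        rcases hw with rfl | rfl
        · exact absurd rfl hwv
        · exact hcon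
      exact hab ((this a ha).symm.trans (this b hb))

/-- valid representative map -/
def ValidRep (c : V → V → K) (S : Finset V) (p : V → V) : Prop :=
  (∀ x ∈ S, p x ∈ S ∧ p (p x) = p x) ∧
  (∀ x ∈ S, ∀ y ∈ S, p x ≠ p y → c x y = c (p x) (p y)) ∧ 2 ≤ (S.image p).card

theorem gallai_aux {c : V → V → K} (hs : ∀ u v, c u v = c v u) (hr : NoRb c) (S : Finset V)
    (n : ℕ) : ∀ p, ValidRep c S p → (S.image p).card = n →
    (∃ A B : Finset V, ∃ i, A.Nonempty ∧ B.Nonempty ∧ Disjoint A B ∧ A ∪ B = S ∧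
      ∀ a ∈ A, ∀ b ∈ B, c a b = i) ∨
    ∃ p : V → V, ∃ i j : K, i ≠ j ∧ ValidRep c S p ∧
      (∀ x ∈ S.image p, ∀ y ∈ S.image p, x ≠ y → c x y = i ∨ c x y = j) ∧
      ∀ X ⊆ S.image p, X.Nonempty → (∃ y ∈ S.image p, y ∉ X) → ∀ l,
        ∃ u ∈ X, ∃ w ∈ S.image p, w ∉ X ∧ c u w ≠ l := by
  induction n using Nat.strong_induction_on with
  | _ n ih =>
  intro p hp hn
  obtain ⟨hp1, hp2, hp3⟩ := hp
  by_cases hcut : ∀ X ⊆ S.image p, X.Nonempty → (∃ y ∈ S.image p, y ∉ X) → ∀ l,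
        ∃ u ∈ X, ∃ w ∈ S.image p, w ∉ X ∧ c u w ≠ l
  swap
  · left
    push Not at hcut
    obtain ⟨X, hXT, ⟨x, hx⟩, ⟨y, hyT, hyX⟩, l, hl⟩ := hcut
    refine ⟨S.filter (fun v => p v ∈ X), S.filter (fun v => p v ∉ X), l, ?_, ?_, ?_, ?_, ?_⟩
    · obtain ⟨v, hv, rfl⟩ := Finset.mem_image.1 (hXT hx)
      exact ⟨v, by simp [hv, hx]⟩
    · obtain ⟨v, hv, rfl⟩ := Finset.mem_image.1 hyT
      exact ⟨v, by simp [hv, hyX]⟩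
    · exact Finset.disjoint_filter_filter_not _ _ _
    · exact Finset.filter_union_filter_not_eq _ _
    · intro a ha b hb
      simp only [Finset.mem_filter] at ha hb
      rw [hp2 a ha.1 b hb.1 (fun h => hb.2 (h ▸ ha.2))]
      exact hl _ ha.2 _ (Finset.mem_image_of_mem _ hb.1) hb.2
  · have hTS : ∀ t ∈ S.image p, t ∈ S ∧ p t = t := by
      intro t ht
      obtain ⟨v, hv, rfl⟩ := Finset.mem_image.1 ht
      exact hp1 v hv
    obtain ⟨u1, hu1, w1, hw1, huw1⟩ := Finset.one_lt_card.1 (show 1 < (S.image p).card by omega)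
    obtain ⟨u2, hu2, w2, hw2, hw2', hc2⟩ := hcut {u1} (by simpa using hu1) (by simp)
      ⟨w1, hw1, by simpa using huw1.symm⟩ (c u1 w1)
    simp only [Finset.mem_singleton] at hu2 hw2'
    subst hu2
    set a := c u2 w1 with ha
    set b := c u2 w2 with hb
    by_cases hall : ∀ x ∈ S.image p, ∀ y ∈ S.image p, x ≠ y → c x y = a ∨ c x y = b
    · right
      exact ⟨p, a, b, hc2.symm, ⟨hp1, hp2, hp3⟩, hall, hcut⟩
    · push Not at hall
      obtain ⟨u3, hu3, w3, hw3, huw3, hca, hcb⟩ := hall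
      have main : ∀ i, Disc c (S.image p) i → (∃ u ∈ S.image p, ∃ w ∈ S.image p, u ≠ w ∧ c u w = i) →
          ∃ p', ValidRep c S p' ∧ (S.image p').card < (S.image p).card := by
        intro i hi ⟨u, hu, w, hw, huw, hci⟩
        set T := S.image p with hT
        set H := colG c hs T i with hH
        let rep : V → V := fun t => (H.connectedComponentMk t).out
        have hrep : ∀ t, H.Reachable (rep t) t := by
          intro t
          apply SimpleGraph.ConnectedComponent.exact
          exact Quot.out_eq _
        have hrep_eq : ∀ t t', H.Reachable t t' → rep t = rep t' := by
          intro t t' h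
          have : H.connectedComponentMk t = H.connectedComponentMk t' :=
            SimpleGraph.ConnectedComponent.sound h
          simp only [rep, this]
        have hrepT : ∀ t ∈ T, rep t ∈ T := fun t ht => reach_mem hs ht (hrep t).symm
        refine ⟨fun v => rep (p v), ⟨?_, ?_, ?_⟩, ?_⟩
        · intro x hx
          have hpx : p x ∈ T := Finset.mem_image_of_mem _ hx
          have h1 := hTS _ (hrepT _ hpx)
          refine ⟨h1.1, ?_⟩
          simp only [h1.2]
          exact hrep_eq _ _ (hrep _)
        · intro x hx y hy hne
          have hpx : p x ∈ T := Finset.mem_image_of_mem _ hx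
          have hpy : p y ∈ T := Finset.mem_image_of_mem _ hy
          have hnr : ¬ H.Reachable (p x) (p y) := fun h => hne (hrep_eq _ _ h)
          have hpp : p x ≠ p y := by
            intro h; apply hne; simp only [h]
          rw [hp2 x hx y hy hpp]
          have e1 : c (p x) (p y) = c (p x) (rep (p y)) :=
            module_lem hs hr hpx hpy (hrep (p y)).symm (fun h => hnr h.symm)
          have e2 : c (rep (p y)) (p x) = c (rep (p y)) (rep (p x)) :=
            module_lem hs hr (hrepT _ hpy) hpx (hrep (p x)).symm (fun h => hnr (h.trans (hrep _)))
          rw [e1, hs, e2, hs]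
        · obtain ⟨x, hx, y, hy, hxy⟩ := disc_nonreach hs hi
          apply Finset.one_lt_card.2
          refine ⟨rep (p x), Finset.mem_image.2 ⟨x, (hTS x hx).1, rfl⟩, rep (p y),
            Finset.mem_image.2 ⟨y, (hTS y hy).1, rfl⟩, ?_⟩
          rw [(hTS x hx).2, (hTS y hy).2]
          intro h
          exact hxy ((hrep x).symm.trans (h ▸ hrep y))
        · have hsub : S.image (fun v => rep (p v)) ⊆ T := by
            intro t ht
            obtain ⟨v, hv, rfl⟩ := Finset.mem_image.1 ht
            exact hrepT _ (Finset.mem_image_of_mem _ hv)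
          have hfix : ∀ t ∈ S.image (fun v => rep (p v)), rep t = t := by
            intro t ht
            obtain ⟨v, hv, rfl⟩ := Finset.mem_image.1 ht
            exact hrep_eq _ _ (hrep _)
          apply Finset.card_lt_card
          refine ⟨hsub, fun hsup => huw ?_⟩
          rw [← hfix u (hsup hu), ← hfix w (hsup hw)]
          exact hrep_eq _ _ (SimpleGraph.Adj.reachable ⟨huw, hu, hw, hci⟩)
      have : ∃ p', ValidRep c S p' ∧ (S.image p').card < (S.image p).card := by
        rcases three_col hs hr (a := a) (b := b) (g := c u3 w3) hc2.symm (Ne.symm hca) (Ne.symm hcb)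
          (S.image p) hp3 with h | h | h
        · exact main _ h ⟨u2, hu1, w1, hw1, huw1, rfl⟩
        · exact main _ h ⟨u2, hu1, w2, hw2, Ne.symm hw2', rfl⟩
        · exact main _ h ⟨u3, hu3, w3, hw3, huw3, rfl⟩
      obtain ⟨p', hp', hlt⟩ := this
      exact ih _ (hn ▸ hlt) p' hp' rfl

theorem gallai {c : V → V → K} (hs : ∀ u v, c u v = c v u) (hr : NoRb c) (S : Finset V)
    (h2 : 2 ≤ S.card) :
    (∃ A B : Finset V, ∃ i, A.Nonempty ∧ B.Nonempty ∧ Disjoint A B ∧ A ∪ B = S ∧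
      ∀ a ∈ A, ∀ b ∈ B, c a b = i) ∨
    ∃ p : V → V, ∃ i j : K, i ≠ j ∧ ValidRep c S p ∧
      (∀ x ∈ S.image p, ∀ y ∈ S.image p, x ≠ y → c x y = i ∨ c x y = j) ∧
      ∀ X ⊆ S.image p, X.Nonempty → (∃ y ∈ S.image p, y ∉ X) → ∀ l,
        ∃ u ∈ X, ∃ w ∈ S.image p, w ∉ X ∧ c u w ≠ l :=
  gallai_aux hs hr S _ id ⟨fun x hx => ⟨hx, rfl⟩, fun _ _ _ _ _ => rfl, by simpa using h2⟩ rfl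

end Gallai

section Ramsey
open scoped Classical
variable {V : Type*}

def J3F (G : SimpleGraph V) (S : Finset V) : Prop :=
  ∀ x ∈ S, ∀ y ∈ S, ∀ z ∈ S, y ≠ z → G.Adj x y → G.Adj x z → False
def J4F (G : SimpleGraph V) (S : Finset V) : Prop :=
  ∀ a ∈ S, ∀ x ∈ S, ∀ y ∈ S, ∀ z ∈ S, y ≠ z → G.Adj a x → G.Adj a y → G.Adj a z →
    G.Adj x y → G.Adj x z → False
def J5F (G : SimpleGraph V) (S : Finset V) : Prop :=
  ∀ b ∈ S, ∀ a ∈ S, ∀ x ∈ S, ∀ y ∈ S, ∀ z ∈ S, y ≠ z → G.Adj b a → G.Adj b x → G.Adj b y →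
    G.Adj b z → G.Adj a x → G.Adj a y → G.Adj a z → G.Adj x y → G.Adj x z → False
def K2F (G : SimpleGraph V) (S : Finset V) : Prop :=
  ∀ x ∈ S, ∀ y ∈ S, G.Adj x y → False
def K3F (G : SimpleGraph V) (S : Finset V) : Prop :=
  ∀ x ∈ S, ∀ y ∈ S, ∀ z ∈ S, G.Adj x y → G.Adj x z → G.Adj y z → False
def K4F (G : SimpleGraph V) (S : Finset V) : Prop :=
  ∀ a ∈ S, ∀ x ∈ S, ∀ y ∈ S, ∀ z ∈ S, G.Adj a x → G.Adj a y → G.Adj a z →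
    G.Adj x y → G.Adj x z → G.Adj y z → False

/-- every pair in `T` is an edge of `R` or of `B` -/
def Cov (R B : SimpleGraph V) (T : Finset V) : Prop :=
  ∀ x ∈ T, ∀ y ∈ T, x ≠ y → R.Adj x y ∨ B.Adj x y

noncomputable def nb (R : SimpleGraph V) (T : Finset V) (v : V) : Finset V :=
  T.filter (fun x => R.Adj v x)

theorem mem_nb {R : SimpleGraph V} {T : Finset V} {v x : V} : x ∈ nb R T v ↔ x ∈ T ∧ R.Adj v x := by
  simp [nb]

theorem nb_sub {R : SimpleGraph V} {T : Finset V} {v : V} : nb R T v ⊆ T := Finset.filter_subset _ _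

theorem Cov.mono {R B : SimpleGraph V} {T U : Finset V} (h : Cov R B T) (hU : U ⊆ T) : Cov R B U :=
  fun x hx y hy => h x (hU hx) y (hU hy)
theorem Cov.symm {R B : SimpleGraph V} {T : Finset V} (h : Cov R B T) : Cov B R T :=
  fun x hx y hy hne => (h x hx y hy hne).symm
theorem J3F.mono {G : SimpleGraph V} {T U : Finset V} (h : J3F G T) (hU : U ⊆ T) : J3F G U :=
  fun x hx y hy z hz => h x (hU hx) y (hU hy) z (hU hz)
theorem J4F.mono {G : SimpleGraph V} {T U : Finset V} (h : J4F G T) (hU : U ⊆ T) : J4F G U :=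
  fun a ha x hx y hy z hz => h a (hU ha) x (hU hx) y (hU hy) z (hU hz)
theorem J5F.mono {G : SimpleGraph V} {T U : Finset V} (h : J5F G T) (hU : U ⊆ T) : J5F G U :=
  fun b hb a ha x hx y hy z hz => h b (hU hb) a (hU ha) x (hU hx) y (hU hy) z (hU hz)
theorem K3F.mono {G : SimpleGraph V} {T U : Finset V} (h : K3F G T) (hU : U ⊆ T) : K3F G U :=
  fun x hx y hy z hz => h x (hU hx) y (hU hy) z (hU hz)
theorem K4F.mono {G : SimpleGraph V} {T U : Finset V} (h : K4F G T) (hU : U ⊆ T) : K4F G U :=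
  fun a ha x hx y hy z hz => h a (hU ha) x (hU hx) y (hU hy) z (hU hz)

theorem J4F.nb {G : SimpleGraph V} {T : Finset V} (h : J4F G T) {v : V} (hv : v ∈ T) :
    J3F G (nb G T v) := by
  intro x hx y hy z hz
  rw [mem_nb] at hx hy hz
  intro h1 h2 h3
  exact h v hv x hx.1 y hy.1 z hz.1 h1 hx.2 hy.2 hz.2 h2 h3
theorem J5F.nb {G : SimpleGraph V} {T : Finset V} (h : J5F G T) {v : V} (hv : v ∈ T) :
    J4F G (nb G T v) := by
  intro a ha x hx y hy z hz
  rw [mem_nb] at ha hx hy hz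
  intro h1 h2 h3 h4 h5 h6
  exact h v hv a ha.1 x hx.1 y hy.1 z hz.1 h1 ha.2 hx.2 hy.2 hz.2 h2 h3 h4 h5 h6
theorem K3F.nb {G : SimpleGraph V} {T : Finset V} (h : K3F G T) {v : V} (hv : v ∈ T) :
    K2F G (nb G T v) := by
  intro x hx y hy
  rw [mem_nb] at hx hy
  intro h2
  exact h v hv x hx.1 y hy.1 hx.2 hy.2 h2
theorem K4F.nb {G : SimpleGraph V} {T : Finset V} (h : K4F G T) {v : V} (hv : v ∈ T) :
    K3F G (nb G T v) := by
  intro x hx y hy z hz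
  rw [mem_nb] at hx hy hz
  intro h2 h3 h4
  exact h v hv x hx.1 y hy.1 z hz.1 hx.2 hy.2 hz.2 h2 h3 h4
theorem J3F.nb {G : SimpleGraph V} {T : Finset V} (h : J3F G T) {v : V} (hv : v ∈ T) :
    (nb G T v).card ≤ 1 := by
  rw [Finset.card_le_one]
  intro a ha b hb
  rw [mem_nb] at ha hb
  by_contra hne
  exact h v hv a ha.1 b hb.1 hne ha.2 hb.2

theorem card_nb {R B : SimpleGraph V} {T : Finset V} (h : Cov R B T) {v : V} (hv : v ∈ T) :
    T.card ≤ 1 + (nb R T v).card + (nb B T v).card := by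
  have : T ⊆ insert v (nb R T v ∪ nb B T v) := by
    intro x hx
    by_cases hxv : x = v
    · simp [hxv]
    · have := h v hv x hx (Ne.symm hxv)
      simp [mem_nb, hx, this]
  calc T.card ≤ _ := Finset.card_le_card this
    _ ≤ (nb R T v ∪ nb B T v).card + 1 := Finset.card_insert_le _ _
    _ ≤ _ := by have := Finset.card_union_le (nb R T v) (nb B T v); omega

theorem n33 {R B : SimpleGraph V} {T : Finset V} (hc : Cov R B T) (hR : J3F R T) (hB : J3F B T) :
    T.card ≤ 2 := by
  by_contra hcon
  obtain ⟨x, hx, y, hy, z, hz, hxy, hxz, hyz⟩ := Finset.two_lt_card.1 (not_le.1 hcon)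
  have h1 := hc x hx y hy hxy
  have h2 := hc x hx z hz hxz
  have h3 := hc y hy z hz hyz
  have a1 := hR x hx y hy z hz hyz
  have a2 := hR y hy x hx z hz hxz
  have a3 := hR z hz x hx y hy hxy
  have b1 := hB x hx y hy z hz hyz
  have b2 := hB y hy x hx z hz hxz
  have b3 := hB z hz x hx y hy hxy
  rw [R.adj_comm y x] at a2
  rw [R.adj_comm z x, R.adj_comm z y] at a3
  rw [B.adj_comm y x] at b2
  rw [B.adj_comm z x, B.adj_comm z y] at b3
  tauto

theorem card_of_nb {R B : SimpleGraph V} {T : Finset V} (hc : Cov R B T) (a b : ℕ)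
    (ha : ∀ v ∈ T, (nb R T v).card ≤ a) (hb : ∀ v ∈ T, (nb B T v).card ≤ b) :
    T.card ≤ 1 + a + b := by
  rcases T.eq_empty_or_nonempty with rfl | ⟨v, hv⟩
  · simp
  · have := card_nb hc hv
    have := ha v hv
    have := hb v hv
    omega

theorem n34 {R B : SimpleGraph V} {T : Finset V} (hc : Cov R B T) (hR : J3F R T) (hB : J4F B T) :
    T.card ≤ 4 :=
  card_of_nb hc 1 2 (fun _ hv => hR.nb hv)
    (fun _ hv => n33 (hc.mono nb_sub) (hR.mono nb_sub) (hB.nb hv))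
theorem n35 {R B : SimpleGraph V} {T : Finset V} (hc : Cov R B T) (hR : J3F R T) (hB : J5F B T) :
    T.card ≤ 6 :=
  card_of_nb hc 1 4 (fun _ hv => hR.nb hv)
    (fun _ hv => n34 (hc.mono nb_sub) (hR.mono nb_sub) (hB.nb hv))
theorem n44 {R B : SimpleGraph V} {T : Finset V} (hc : Cov R B T) (hR : J4F R T) (hB : J4F B T) :
    T.card ≤ 9 :=
  card_of_nb hc 4 4 (fun _ hv => n34 (hc.mono nb_sub) (hR.nb hv) (hB.mono nb_sub))
    (fun _ hv => n34 (hc.symm.mono nb_sub) (hB.nb hv) (hR.mono nb_sub))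
theorem n45 {R B : SimpleGraph V} {T : Finset V} (hc : Cov R B T) (hR : J4F R T) (hB : J5F B T) :
    T.card ≤ 16 :=
  card_of_nb hc 6 9 (fun _ hv => n35 (hc.mono nb_sub) (hR.nb hv) (hB.mono nb_sub))
    (fun _ hv => n44 (hc.mono nb_sub) (hR.mono nb_sub) (hB.nb hv))
theorem n55 {R B : SimpleGraph V} {T : Finset V} (hc : Cov R B T) (hR : J5F R T) (hB : J5F B T) :
    T.card ≤ 33 :=
  card_of_nb hc 16 16 (fun _ hv => n45 (hc.mono nb_sub) (hR.nb hv) (hB.mono nb_sub))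
    (fun _ hv => n45 (hc.symm.mono nb_sub) (hB.nb hv) (hR.mono nb_sub))

theorem K2F.blue {R B : SimpleGraph V} {T : Finset V} (hc : Cov R B T) (hR : K2F R T) :
    ∀ x ∈ T, ∀ y ∈ T, x ≠ y → B.Adj x y :=
  fun x hx y hy hne => (hc x hx y hy hne).resolve_left (hR x hx y hy)

theorem k2k3 {R B : SimpleGraph V} {T : Finset V} (hc : Cov R B T) (hR : K2F R T) (hB : K3F B T) :
    T.card ≤ 2 := by
  by_contra hcon
  obtain ⟨x, hx, y, hy, z, hz, hxy, hxz, hyz⟩ := Finset.two_lt_card.1 (not_le.1 hcon)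
  have h := hR.blue hc
  exact hB x hx y hy z hz (h _ hx _ hy hxy) (h _ hx _ hz hxz) (h _ hy _ hz hyz)

theorem K2F.mono {G : SimpleGraph V} {T U : Finset V} (h : K2F G T) (hU : U ⊆ T) : K2F G U :=
  fun x hx y hy => h x (hU hx) y (hU hy)

theorem k2_nb {R : SimpleGraph V} {T : Finset V} (hR : K2F R T) {v : V} (hv : v ∈ T) :
    (nb R T v).card ≤ 0 := by
  rw [Nat.le_zero, Finset.card_eq_zero, Finset.eq_empty_iff_forall_notMem]
  intro x hx
  rw [mem_nb] at hx
  exact hR v hv x hx.1 hx.2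

theorem k2j3 {R B : SimpleGraph V} {T : Finset V} (hc : Cov R B T) (hR : K2F R T) (hB : J3F B T) :
    T.card ≤ 2 :=
  card_of_nb hc 0 1 (fun _ hv => k2_nb hR hv) (fun _ hv => hB.nb hv)
theorem k2j4 {R B : SimpleGraph V} {T : Finset V} (hc : Cov R B T) (hR : K2F R T) (hB : J4F B T) :
    T.card ≤ 3 :=
  card_of_nb hc 0 2 (fun _ hv => k2_nb hR hv)
    (fun _ hv => k2j3 (hc.mono nb_sub) (hR.mono nb_sub) (hB.nb hv))
theorem k2j5 {R B : SimpleGraph V} {T : Finset V} (hc : Cov R B T) (hR : K2F R T) (hB : J5F B T) :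
    T.card ≤ 4 :=
  card_of_nb hc 0 3 (fun _ hv => k2_nb hR hv)
    (fun _ hv => k2j4 (hc.mono nb_sub) (hR.mono nb_sub) (hB.nb hv))
theorem k2k4 {R B : SimpleGraph V} {T : Finset V} (hc : Cov R B T) (hR : K2F R T) (hB : K4F B T) :
    T.card ≤ 3 :=
  card_of_nb hc 0 2 (fun _ hv => k2_nb hR hv)
    (fun _ hv => k2k3 (hc.mono nb_sub) (hR.mono nb_sub) (hB.nb hv))
theorem k3k3 {R B : SimpleGraph V} {T : Finset V} (hc : Cov R B T) (hR : K3F R T) (hB : K3F B T) :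
    T.card ≤ 5 :=
  card_of_nb hc 2 2 (fun _ hv => k2k3 (hc.mono nb_sub) (hR.nb hv) (hB.mono nb_sub))
    (fun _ hv => k2k3 (hc.symm.mono nb_sub) (hB.nb hv) (hR.mono nb_sub))

theorem even_sum_nb (R : SimpleGraph V) (T : Finset V) : Even (∑ v ∈ T, (nb R T v).card) := by
  have h := (R.induce (T : Set V)).sum_degrees_eq_twice_card_edges
  have : ∑ v ∈ T, (nb R T v).card = ∑ v : (T : Set V), (R.induce (T : Set V)).degree v := by
    rw [← Finset.sum_coe_sort]
    apply Finset.sum_congr rfl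
    intro v _
    rw [← SimpleGraph.card_neighborFinset_eq_degree]
    symm
    apply Finset.card_bij (fun (x : (T : Set V)) _ => (x : V))
    · intro x hx
      rw [SimpleGraph.mem_neighborFinset] at hx
      rw [mem_nb]
      exact ⟨x.2, hx⟩
    · intro a _ b _ h; exact Subtype.ext h
    · intro b hb
      rw [mem_nb] at hb
      exact ⟨⟨b, hb.1⟩, by rw [SimpleGraph.mem_neighborFinset]; exact hb.2, rfl⟩
  rw [this, h]
  exact even_two_mul _

theorem k3k4 {R B : SimpleGraph V} {T : Finset V} (hc : Cov R B T) (hR : K3F R T) (hB : K4F B T) :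
    T.card ≤ 8 := by
  have h1 : ∀ v ∈ T, (nb R T v).card ≤ 3 := 
    fun _ hv => k2k4 (hc.mono nb_sub) (hR.nb hv) (hB.mono nb_sub)
  have h2 : ∀ v ∈ T, (nb B T v).card ≤ 5 := 
    fun _ hv => k3k3 (hc.mono nb_sub) (hR.mono nb_sub) (hB.nb hv)
  have h3 := card_of_nb hc 3 5 h1 h2
  by_contra hcon
  have h9 : T.card = 9 := by omega
  have h4 : ∀ v ∈ T, (nb R T v).card = 3 := by
    intro v hv
    have := card_nb hc hv
    have := h1 v hv
    have := h2 v hv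
    omega
  have h5 := even_sum_nb R T
  rw [Finset.sum_congr rfl h4, Finset.sum_const, h9] at h5
  revert h5; decide
theorem k4k4 {R B : SimpleGraph V} {T : Finset V} (hc : Cov R B T) (hR : K4F R T) (hB : K4F B T) :
    T.card ≤ 17 :=
  card_of_nb hc 8 8 (fun _ hv => k3k4 (hc.mono nb_sub) (hR.nb hv) (hB.mono nb_sub))
    (fun _ hv => k3k4 (hc.symm.mono nb_sub) (hB.nb hv) (hR.mono nb_sub))

/-- `R(K₃,P₃) ≤ 5` -/
theorem k3j3 {R B : SimpleGraph V} {T : Finset V} (hc : Cov R B T) (hR : K3F R T) (hB : J3F B T) :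
    T.card ≤ 4 :=
  card_of_nb hc 2 1 (fun _ hv => k2j3 (hc.mono nb_sub) (hR.nb hv) (hB.mono nb_sub))
    (fun _ hv => hB.nb hv)

theorem four_of_card {T : Finset V} (h : 4 ≤ T.card) : ∃ a ∈ T, ∃ b ∈ T, ∃ c ∈ T, ∃ d ∈ T,
    a ≠ b ∧ a ≠ c ∧ a ≠ d ∧ b ≠ c ∧ b ≠ d ∧ c ≠ d := by
  obtain ⟨a, ha⟩ := Finset.card_pos.1 (show 0 < T.card by omega)
  have h3 : 2 < (T.erase a).card := by rw [Finset.card_erase_of_mem ha]; omega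
  obtain ⟨x, hx, y, hy, z, hz, hxy, hxz, hyz⟩ := Finset.two_lt_card.1 h3
  simp only [Finset.mem_erase] at hx hy hz
  exact ⟨a, ha, x, hx.2, y, hy.2, z, hz.2, hx.1.symm, hy.1.symm, hz.1.symm, hxy, hxz, hyz⟩

/-- `R(K₃, K₄-e) ≤ 7` -/
theorem k3j4 {R B : SimpleGraph V} {T : Finset V} (hc : Cov R B T)
    (hd : ∀ x y, R.Adj x y → ¬ B.Adj x y) (hR : K3F R T) (hB : J4F B T) :
    T.card ≤ 6 := by
  by_contra hcon
  obtain ⟨U, hU, hU7⟩ := Finset.exists_subset_card_eq (show 7 ≤ T.card by omega)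
  replace hc := hc.mono hU
  replace hR := hR.mono hU
  replace hB := hB.mono hU
  obtain ⟨v, hv⟩ := Finset.card_pos.1 (show 0 < U.card by omega)
  have h1 : (nb R U v).card ≤ 3 := k2j4 (hc.mono nb_sub) (hR.nb hv) (hB.mono nb_sub)
  have h2 : (nb B U v).card ≤ 4 := k3j3 (hc.mono nb_sub) (hR.mono nb_sub) (hB.nb hv)
  have h3 := card_nb hc hv
  by_cases h : (nb R U v).card = 3
  · have hw3 : 2 < (nb B U v).card := by omega
    obtain ⟨a, ha, b, hb, d, hd', hab, had, hbd⟩ := Finset.two_lt_card.1 (show 2 < (nb R U v).card by omega)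
    obtain ⟨x, hx, y, hy, z, hz, hxy, hxz, hyz⟩ := Finset.two_lt_card.1 hw3
    have bl := (hR.nb hv).blue (hc.mono nb_sub)
    have bab := bl a ha b hb hab
    have bad := bl a ha d hd' had
    have bbd := bl b hb d hd' hbd
    rw [mem_nb] at ha hb hd' hx hy hz
    -- for w in W
    have key : ∀ w ∈ U, B.Adj v w → (R.Adj w a ∨ R.Adj w b) ∧ (R.Adj w a ∨ R.Adj w d) ∧
        (R.Adj w b ∨ R.Adj w d) := by
      intro w hw hvw
      have wa : w ≠ a := by rintro rfl; exact hd _ _ ha.2 hvw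
      have wb : w ≠ b := by rintro rfl; exact hd _ _ hb.2 hvw
      have wd : w ≠ d := by rintro rfl; exact hd _ _ hd'.2 hvw
      have ca := hc w hw a ha.1 wa
      have cb := hc w hw b hb.1 wb
      have cd := hc w hw d hd'.1 wd
      have j1 := hB a ha.1 b hb.1 d hd'.1 w hw wd.symm bab bad
      have j2 := hB a ha.1 d hd'.1 b hb.1 w hw wb.symm bad bab
      have j3 := hB b hb.1 d hd'.1 a ha.1 w hw wa.symm bbd bab.symm
      rw [B.adj_comm a w, B.adj_comm b w] at j1
      rw [B.adj_comm a w, B.adj_comm d w] at j2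
      rw [B.adj_comm b w, B.adj_comm d w] at j3
      have := bad.symm
      have := bbd.symm
      grind only
    have key2 : ∀ w ∈ U, ∀ w' ∈ U, B.Adj v w → B.Adj v w' → w ≠ w' → B.Adj w w' := by
      intro w hw w' hw' h h' hne
      refine (hc w hw w' hw' hne).resolve_left (fun hr => ?_)
      have k1 := key w hw h
      have k2 := key w' hw' h'
      have t1 := hR w hw w' hw' a ha.1 hr
      have t2 := hR w hw w' hw' b hb.1 hr
      have t3 := hR w hw w' hw' d hd'.1 hr
      grind only
    exact hB v hv x hx.1 y hy.1 z hz.1 hyz hx.2 hy.2 hz.2 (key2 _ hx.1 _ hy.1 hx.2 hy.2 hxy)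
      (key2 _ hx.1 _ hz.1 hx.2 hz.2 hxz)
  · obtain ⟨a, ha⟩ := Finset.card_pos.1 (show 0 < (nb R U v).card by omega)
    obtain ⟨w, hw, x, hx, y, hy, z, hz, hwx, hwy, hwz, hxy, hxz, hyz⟩ :=
      four_of_card (show 4 ≤ (nb B U v).card by omega)
    rw [mem_nb] at ha hw hx hy hz
    have key : ∀ p ∈ U, ∀ q ∈ U, B.Adj v p → B.Adj v q → B.Adj p q → R.Adj a p ∨ R.Adj a q := by
      intro p hp q hq h1 h2 h3
      have ap : a ≠ p := by rintro rfl; exact hd _ _ ha.2 h1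
      have aq : a ≠ q := by rintro rfl; exact hd _ _ ha.2 h2
      have c1 := hc a ha.1 p hp ap
      have c2 := hc a ha.1 q hq aq
      have j := hB p hp q hq v hv a ha.1 (ha.2.ne) h3 h1.symm
      rw [B.adj_comm p a, B.adj_comm q a] at j
      have := h2.symm
      grind only
    have m : ∀ p ∈ U, ∀ q ∈ U, ∀ r ∈ U, q ≠ r → B.Adj v p → B.Adj v q → B.Adj v r →
        B.Adj p q → ¬ B.Adj p r := by
      intro p hp q hq r hr hne h1 h2 h3 h4 h5
      exact hB v hv p hp q hq r hr hne h1 h2 h3 h4 h5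
    -- a matching-type argument
    have fin : ∀ p ∈ U, ∀ q ∈ U, ∀ r ∈ U, ∀ s ∈ U, p ≠ q → p ≠ r → p ≠ s → q ≠ r → q ≠ s → r ≠ s →
        B.Adj v p → B.Adj v q → B.Adj v r → B.Adj v s → R.Adj p q → R.Adj p r → False := by
      intro p hp q hq r hr s hs pq pr ps qr qs rs bp bq br bs h1 h2
      have b1 : B.Adj q r := (hc q hq r hr qr).resolve_left (fun h => hR p hp q hq r hr h1 h2 h)
      have r1 : R.Adj q s := (hc q hq s hs qs).resolve_right (m q hq r hr s hs rs bq br bs b1)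
      have r2 : R.Adj r s := (hc r hr s hs rs).resolve_right (m r hr q hq s hs qs br bq bs b1.symm)
      have b2 : B.Adj p s := (hc p hp s hs ps).resolve_left (fun h => hR p hp q hq s hs h1 h r1)
      have k1 := key q hq r hr bq br b1
      have k2 := key p hp s hs bp bs b2
      have t1 := hR a ha.1 p hp q hq
      have t2 := hR a ha.1 p hp r hr
      have t3 := hR a ha.1 q hq s hs
      have t4 := hR a ha.1 r hr s hs
      grind only
    have c1 := hc w hw.1 x hx.1 hwx
    have c2 := hc w hw.1 y hy.1 hwy
    have c3 := hc w hw.1 z hz.1 hwz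
    have f1 := fin w hw.1 x hx.1 y hy.1 z hz.1 hwx hwy hwz hxy hxz hyz hw.2 hx.2 hy.2 hz.2
    have f2 := fin w hw.1 x hx.1 z hz.1 y hy.1 hwx hwz hwy hxz hxy hyz.symm hw.2 hx.2 hz.2 hy.2
    have f3 := fin w hw.1 y hy.1 z hz.1 x hx.1 hwy hwz hwx hyz hxy.symm hxz.symm hw.2 hy.2 hz.2 hx.2
    have m1 := m w hw.1 x hx.1 y hy.1 hxy hw.2 hx.2 hy.2
    have m2 := m w hw.1 x hx.1 z hz.1 hxz hw.2 hx.2 hz.2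
    have m3 := m w hw.1 y hy.1 z hz.1 hyz hw.2 hy.2 hz.2
    grind only

/-- `R(K₃, K₅-e) ≤ 11` -/
theorem k3j5 {R B : SimpleGraph V} {T : Finset V} (hc : Cov R B T)
    (hd : ∀ x y, R.Adj x y → ¬ B.Adj x y) (hR : K3F R T) (hB : J5F B T) :
    T.card ≤ 10 := by
  by_contra hcon
  obtain ⟨U, hU, hU11⟩ := Finset.exists_subset_card_eq (show 11 ≤ T.card by omega)
  replace hc := hc.mono hU
  replace hR := hR.mono hU
  replace hB := hB.mono hU
  have hcard : ∀ v ∈ U, (nb R U v).card = 4 ∧ (nb B U v).card = 6 := by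
    intro v hv
    have h1 : (nb R U v).card ≤ 4 := k2j5 (hc.mono nb_sub) (hR.nb hv) (hB.mono nb_sub)
    have h2 : (nb B U v).card ≤ 6 := k3j4 (hc.mono nb_sub) hd (hR.mono nb_sub) (hB.nb hv)
    have h3 := card_nb hc hv
    omega
  have ge2 : ∀ v ∈ U, ∀ w ∈ nb B U v, 2 ≤ ((nb R U v).filter (fun a => R.Adj w a)).card := by
    intro v hv w hw
    rw [mem_nb] at hw
    by_contra hlt
    have hs := Finset.card_filter_add_card_filter_not (s := nb R U v) (fun a => R.Adj w a)
    rw [(hcard v hv).1] at hs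
    obtain ⟨x, hx, y, hy, z, hz, hxy, hxz, hyz⟩ := Finset.two_lt_card.1
      (show 2 < ((nb R U v).filter (fun a => ¬ R.Adj w a)).card by omega)
    rw [Finset.mem_filter] at hx hy hz
    have hex : ∃ u ∈ nb R U v, u ≠ x ∧ u ≠ y ∧ u ≠ z := by
      by_contra hno
      push Not at hno
      have : nb R U v ⊆ {x, y, z} := by
        intro u hu
        have := hno u hu
        simp only [Finset.mem_insert, Finset.mem_singleton]
        grind only
      have := Finset.card_le_card this
      have := Finset.card_le_three (a := x) (b := y) (c := z)
      have := (hcard v hv).1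
      omega
    obtain ⟨u, hu, ux, uy, uz⟩ := hex
    have bl := (hR.nb hv).blue (hc.mono nb_sub)
    have wne : ∀ q ∈ nb R U v, w ≠ q := by
      rintro q hq rfl
      rw [mem_nb] at hq
      exact hd _ _ hq.2 hw.2
    have bw : ∀ q ∈ nb R U v, ¬ R.Adj w q → B.Adj q w := fun q hq h =>
      ((hc w hw.1 q (nb_sub hq) (wne q hq)).resolve_left h).symm
    exact hB x (nb_sub hx.1) y (nb_sub hy.1) z (nb_sub hz.1) u (nb_sub hu) w hw.1 (wne u hu).symm
      (bl _ hx.1 _ hy.1 hxy) (bl _ hx.1 _ hz.1 hxz) (bl _ hx.1 _ hu ux.symm) (bw _ hx.1 hx.2)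
      (bl _ hy.1 _ hz.1 hyz) (bl _ hy.1 _ hu uy.symm) (bw _ hy.1 hy.2)
      (bl _ hz.1 _ hu uz.symm) (bw _ hz.1 hz.2)
  have eq2 : ∀ v ∈ U, ∀ w ∈ nb B U v, ((nb R U v).filter (fun a => R.Adj w a)).card = 2 := by
    intro v hv w hw
    by_contra hne
    have dc := Finset.sum_card_bipartiteAbove_eq_sum_card_bipartiteBelow
      (s := nb B U v) (t := nb R U v) (fun w a => R.Adj w a)
    have l1 : ∑ w ∈ nb B U v, 2 < ∑ w ∈ nb B U v, ((nb R U v).filter (fun a => R.Adj w a)).card := by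
      apply Finset.sum_lt_sum
      · exact ge2 v hv
      · exact ⟨w, hw, lt_of_le_of_ne (ge2 v hv w hw) (Ne.symm hne)⟩
    have l2 : ∑ a ∈ nb R U v, ((nb B U v).filter (fun w => R.Adj w a)).card ≤ ∑ a ∈ nb R U v, 3 := by
      apply Finset.sum_le_sum
      intro a ha
      have hva := mem_nb.1 ha
      have hsub : (nb B U v).filter (fun w => R.Adj w a) ⊆ (nb R U a).erase v := by
        intro w hw
        rw [Finset.mem_filter, mem_nb] at hw
        rw [Finset.mem_erase, mem_nb]
        exact ⟨hw.1.2.ne', hw.1.1, hw.2.symm⟩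
      have := Finset.card_le_card hsub
      rw [Finset.card_erase_of_mem (mem_nb.2 ⟨hv, hva.2.symm⟩), (hcard a hva.1).1] at this
      exact this
    simp only [Finset.sum_const, smul_eq_mul, (hcard v hv).1, (hcard v hv).2] at l1 l2
    simp only [Finset.bipartiteAbove, Finset.bipartiteBelow] at dc
    omega
  obtain ⟨v, hv⟩ := Finset.card_pos.1 (show 0 < U.card by omega)
  obtain ⟨w, hw⟩ := Finset.card_pos.1 (show 0 < (nb B U v).card by rw [(hcard v hv).2]; omega)
  have hwU := mem_nb.1 hw
  have e1 := eq2 v hv w hw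
  have e2 : 2 ≤ ((nb R U w).filter (fun a => ¬ R.Adj v a)).card := by
    have hs := Finset.card_filter_add_card_filter_not (s := nb R U w) (fun a => R.Adj v a)
    have e3 := eq2 w hwU.1 v (mem_nb.2 ⟨hv, hwU.2.symm⟩)
    rw [(hcard w hwU.1).1, e3] at hs
    omega
  obtain ⟨x, hx, y, hy, hxy⟩ := Finset.one_lt_card.1 e2
  have hC : ∀ x ∈ (nb R U w).filter (fun a => ¬ R.Adj v a),
      x ∈ nb B U v ∧ (nb R U v).filter (fun a => R.Adj x a) = (nb R U v).filter (fun a => ¬ R.Adj w a) := by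
    intro x hx
    rw [Finset.mem_filter, mem_nb] at hx
    have vx : v ≠ x := by rintro rfl; exact hd _ _ hx.1.2.symm hwU.2
    have hxB : x ∈ nb B U v := mem_nb.2 ⟨hx.1.1, (hc v hv x hx.1.1 vx).resolve_left hx.2⟩
    refine ⟨hxB, ?_⟩
    apply Finset.eq_of_subset_of_card_le
    · intro a ha
      rw [Finset.mem_filter] at ha ⊢
      exact ⟨ha.1, fun h => hR w hwU.1 x hx.1.1 a (nb_sub ha.1) hx.1.2 h ha.2⟩
    · rw [eq2 v hv x hxB]
      have hs := Finset.card_filter_add_card_filter_not (s := nb R U v) (fun a => R.Adj w a)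
      rw [(hcard v hv).1, e1] at hs
      omega
  obtain ⟨hxB, hxC⟩ := hC x hx
  obtain ⟨hyB, hyC⟩ := hC y hy
  have e4 := eq2 v hv x hxB
  obtain ⟨p, hp, q, hq, hpq⟩ := Finset.one_lt_card.1 (show 1 < ((nb R U v).filter (fun a => R.Adj x a)).card by omega)
  have hp' := hp
  have hq' := hq
  rw [hxC, ← hyC] at hp' hq'
  rw [Finset.mem_filter] at hp hq hp' hq'
  have bpq := (hR.nb hv).blue (hc.mono nb_sub) p hp.1 q hq.1 hpq
  have e5 := eq2 p (nb_sub hp.1) q (mem_nb.2 ⟨nb_sub hq.1, bpq⟩)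
  have hp1 := mem_nb.1 hp.1
  have hq1 := mem_nb.1 hq.1
  have hxB' := mem_nb.1 hxB
  have hyB' := mem_nb.1 hyB
  have : 2 < ((nb R U p).filter (fun a => R.Adj q a)).card := by
    rw [Finset.two_lt_card]
    refine ⟨v, ?_, x, ?_, y, ?_, hxB'.2.ne, hyB'.2.ne, hxy⟩
    · rw [Finset.mem_filter, mem_nb]; exact ⟨⟨hv, hp1.2.symm⟩, hq1.2.symm⟩
    · rw [Finset.mem_filter, mem_nb]; exact ⟨⟨hxB'.1, hp.2.symm⟩, hq.2.symm⟩
    · rw [Finset.mem_filter, mem_nb]; exact ⟨⟨hyB'.1, hp'.2.symm⟩, hq'.2.symm⟩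
  omega

theorem removal {T D : Finset V} (hD : D ⊆ T) (N w : ℕ) (hw : 0 < w) (Crit : Finset V → Prop)
    (hcrit : ∀ U ⊆ T, N < U.card → ∃ Q ⊆ U, Crit Q) (hcw : ∀ Q, Crit Q → w ≤ Q.card)
    (hdis : ∀ Q ⊆ T, Crit Q → Disjoint Q D) (hn : N < T.card) :
    w + (T.card - N - 1) ≤ (T \ D).card ∧
    (w + (T.card - N - 1) = (T \ D).card → ∀ U ⊆ T \ D, U.card = w → Crit U) := by
  have hcardD : (T \ D).card + D.card = T.card := Finset.card_sdiff_add_card_eq_card hD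
  have key : ∀ X ⊆ T \ D, X.card = T.card - N - 1 → ∃ Q ⊆ (T \ D) \ X, Crit Q := by
    intro X hX hXc
    have hXT : X ⊆ T := hX.trans Finset.sdiff_subset
    have h1 : (T \ X).card + X.card = T.card := Finset.card_sdiff_add_card_eq_card hXT
    obtain ⟨Q, hQ, hQc⟩ := hcrit (T \ X) Finset.sdiff_subset (by omega)
    refine ⟨Q, ?_, hQc⟩
    have hdd := hdis Q (hQ.trans Finset.sdiff_subset) hQc
    intro q hq
    have h2 := hQ hq
    have h3 := Finset.disjoint_left.1 hdd hq
    simp only [Finset.mem_sdiff] at h2 ⊢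
    tauto
  have hDN : D.card ≤ N := by
    by_contra hcon
    obtain ⟨Q, hQ, hQc⟩ := hcrit D hD (by omega)
    have h1 := hdis Q (hQ.trans hD) hQc
    have h2 := hcw Q hQc
    obtain ⟨q, hq⟩ := Finset.card_pos.1 (show 0 < Q.card by omega)
    exact Finset.disjoint_left.1 h1 hq (hQ hq)
  constructor
  · obtain ⟨X, hX, hXc⟩ := Finset.exists_subset_card_eq (show T.card - N - 1 ≤ (T \ D).card by omega)
    obtain ⟨Q, hQ, hQc⟩ := key X hX hXc
    have h1 := Finset.card_le_card hQ
    have h2 := hcw Q hQc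
    have h3 : ((T \ D) \ X).card + X.card = (T \ D).card := Finset.card_sdiff_add_card_eq_card hX
    omega
  · intro heq U hU hUc
    have h3 : ((T \ D) \ U).card + U.card = (T \ D).card := Finset.card_sdiff_add_card_eq_card hU
    obtain ⟨Q, hQ, hQc⟩ := key ((T \ D) \ U) Finset.sdiff_subset (by omega)
    rw [Finset.sdiff_sdiff_eq_self hU] at hQ
    have : Q = U := Finset.eq_of_subset_of_card_le hQ (by rw [hUc]; exact hcw Q hQc)
    rwa [← this]

def Q3 (G : SimpleGraph V) (Q : Finset V) : Prop :=
  ∃ x y z, G.Adj x y ∧ G.Adj x z ∧ G.Adj y z ∧ Q = {x, y, z}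
def Q4 (G : SimpleGraph V) (Q : Finset V) : Prop :=
  ∃ a x y z, G.Adj a x ∧ G.Adj a y ∧ G.Adj a z ∧ G.Adj x y ∧ G.Adj x z ∧ G.Adj y z ∧ Q = {a, x, y, z}

theorem Q3.card {G : SimpleGraph V} {Q : Finset V} (h : Q3 G Q) : Q.card = 3 := by
  obtain ⟨x, y, z, h1, h2, h3, rfl⟩ := h
  exact Finset.card_eq_three.2 ⟨x, y, z, h1.ne, h2.ne, h3.ne, rfl⟩
theorem Q4.card {G : SimpleGraph V} {Q : Finset V} (h : Q4 G Q) : Q.card = 4 := by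
  obtain ⟨a, x, y, z, h1, h2, h3, h4, h5, h6, rfl⟩ := h
  rw [Finset.card_insert_of_notMem, Finset.card_eq_three.2 ⟨x, y, z, h4.ne, h5.ne, h6.ne, rfl⟩]
  simp [h1.ne, h2.ne, h3.ne]
theorem Q3.adj {G : SimpleGraph V} {Q : Finset V} (h : Q3 G Q) :
    ∀ u ∈ Q, ∀ v ∈ Q, u ≠ v → G.Adj u v := by
  obtain ⟨x, y, z, h1, h2, h3, rfl⟩ := h
  have := h1.symm
  have := h2.symm
  have := h3.symm
  intro u hu v hv hne
  simp only [Finset.mem_insert, Finset.mem_singleton] at hu hv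
  rcases hu with rfl | rfl | rfl <;> rcases hv with rfl | rfl | rfl <;> first | assumption | exact absurd rfl hne
theorem Q4.adj {G : SimpleGraph V} {Q : Finset V} (h : Q4 G Q) :
    ∀ u ∈ Q, ∀ v ∈ Q, u ≠ v → G.Adj u v := by
  obtain ⟨a, x, y, z, h1, h2, h3, h4, h5, h6, rfl⟩ := h
  have := h1.symm
  have := h2.symm
  have := h3.symm
  have := h4.symm
  have := h5.symm
  have := h6.symm
  intro u hu v hv hne
  simp only [Finset.mem_insert, Finset.mem_singleton] at hu hv
  rcases hu with rfl | rfl | rfl | rfl <;> rcases hv with rfl | rfl | rfl | rfl <;>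
    first | assumption | exact absurd rfl hne

theorem exists_Q3 {G : SimpleGraph V} {U : Finset V} (h : ¬ K3F G U) : ∃ Q ⊆ U, Q3 G Q := by
  unfold K3F at h
  push Not at h
  obtain ⟨x, hx, y, hy, z, hz, h1, h2, h3, -⟩ := h
  refine ⟨{x, y, z}, ?_, x, y, z, h1, h2, h3, rfl⟩
  intro u hu
  simp only [Finset.mem_insert, Finset.mem_singleton] at hu
  rcases hu with rfl | rfl | rfl <;> assumption
theorem exists_Q4 {G : SimpleGraph V} {U : Finset V} (h : ¬ K4F G U) : ∃ Q ⊆ U, Q4 G Q := by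
  unfold K4F at h
  push Not at h
  obtain ⟨a, ha, x, hx, y, hy, z, hz, h1, h2, h3, h4, h5, h6, -⟩ := h
  refine ⟨{a, x, y, z}, ?_, a, x, y, z, h1, h2, h3, h4, h5, h6, rfl⟩
  intro u hu
  simp only [Finset.mem_insert, Finset.mem_singleton] at hu
  rcases hu with rfl | rfl | rfl | rfl <;> assumption

theorem Q3.disj {G : SimpleGraph V} {T D Q : Finset V} (hD : ∀ d ∈ D, K2F G (nb G T d))
    (hQT : Q ⊆ T) (h : Q3 G Q) : Disjoint Q D := by
  rw [Finset.disjoint_left]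
  intro d hd hdD
  have h2 : 1 < (Q.erase d).card := by rw [Finset.card_erase_of_mem hd, h.card]; omega
  obtain ⟨x, hx, y, hy, hxy⟩ := Finset.one_lt_card.1 h2
  rw [Finset.mem_erase] at hx hy
  exact hD d hdD x (mem_nb.2 ⟨hQT hx.2, h.adj _ hd _ hx.2 hx.1.symm⟩) y
    (mem_nb.2 ⟨hQT hy.2, h.adj _ hd _ hy.2 hy.1.symm⟩) (h.adj _ hx.2 _ hy.2 hxy)
theorem Q4.disj {G : SimpleGraph V} {T D Q : Finset V} (hD : ∀ d ∈ D, K3F G (nb G T d))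
    (hQT : Q ⊆ T) (h : Q4 G Q) : Disjoint Q D := by
  rw [Finset.disjoint_left]
  intro d hd hdD
  have h2 : 2 < (Q.erase d).card := by rw [Finset.card_erase_of_mem hd, h.card]; omega
  obtain ⟨x, hx, y, hy, z, hz, hxy, hxz, hyz⟩ := Finset.two_lt_card.1 h2
  rw [Finset.mem_erase] at hx hy hz
  exact hD d hdD x (mem_nb.2 ⟨hQT hx.2, h.adj _ hd _ hx.2 hx.1.symm⟩) y
    (mem_nb.2 ⟨hQT hy.2, h.adj _ hd _ hy.2 hy.1.symm⟩) z
    (mem_nb.2 ⟨hQT hz.2, h.adj _ hd _ hz.2 hz.1.symm⟩)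
    (h.adj _ hx.2 _ hy.2 hxy) (h.adj _ hx.2 _ hz.2 hxz) (h.adj _ hy.2 _ hz.2 hyz)

theorem D_K3F {G : SimpleGraph V} {T D : Finset V} (hDT : D ⊆ T) (hD : ∀ d ∈ D, K2F G (nb G T d)) :
    K3F G D := fun x hx y hy z hz h1 h2 h3 =>
  hD x hx y (mem_nb.2 ⟨hDT hy, h1⟩) z (mem_nb.2 ⟨hDT hz, h2⟩) h3
theorem D_K4F {G : SimpleGraph V} {T D : Finset V} (hDT : D ⊆ T) (hD : ∀ d ∈ D, K3F G (nb G T d)) :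
    K4F G D := fun a ha x hx y hy z hz h1 h2 h3 h4 h5 h6 =>
  hD a ha x (mem_nb.2 ⟨hDT hx, h1⟩) y (mem_nb.2 ⟨hDT hy, h2⟩) z (mem_nb.2 ⟨hDT hz, h3⟩) h4 h5 h6

theorem dlem44 {R B : SimpleGraph V} {T D : Finset V} (hc : Cov R B T)
    (hR : J4F R T) (hB : J4F B T) (hDT : D ⊆ T)
    (hDR : ∀ d ∈ D, K2F R (nb R T d)) (hDB : ∀ d ∈ D, K2F B (nb B T d)) :
    D.card ≤ 5 ∧ T.card + D.card ≤ 10 := by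
  have h5 : D.card ≤ 5 := k3k3 (hc.mono hDT) (D_K3F hDT hDR) (D_K3F hDT hDB)
  refine ⟨h5, ?_⟩
  rcases D.eq_empty_or_nonempty with rfl | ⟨d, hd⟩
  · have := n44 hc hR hB
    simp; omega
  · have hdT := hDT hd
    have a1 := card_nb hc hdT
    have a2 : (nb R T d).card ≤ 3 := k2j4 (hc.mono nb_sub) (hDR d hd) (hB.mono nb_sub)
    have a3 : (nb B T d).card ≤ 3 := k2j4 (hc.symm.mono nb_sub) (hDB d hd) (hR.mono nb_sub)
    by_cases hT : 5 < T.card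
    · have hrem := (removal hDT 5 3 (by omega) (fun Q => Q3 R Q ∨ Q3 B Q) (by
        intro U hU hU5
        by_cases hu : K3F R U
        · by_cases hu' : K3F B U
          · have := k3k3 (hc.mono hU) hu hu'
            omega
          · obtain ⟨Q, h1, h2⟩ := exists_Q3 hu'
            exact ⟨Q, h1, Or.inr h2⟩
        · obtain ⟨Q, h1, h2⟩ := exists_Q3 hu
          exact ⟨Q, h1, Or.inl h2⟩) (by
        rintro Q (h | h) <;> rw [h.card]) (by
        rintro Q hQ (h | h)
        · exact h.disj hDR hQ
        · exact h.disj hDB hQ) hT).1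
      have hcardD : (T \ D).card + D.card = T.card := Finset.card_sdiff_add_card_eq_card hDT
      omega
    · have := Finset.card_le_card hDT
      omega

theorem dlem45 {R B : SimpleGraph V} {T D : Finset V} (hc : Cov R B T)
    (hd : ∀ x y, R.Adj x y → ¬ B.Adj x y)
    (hR : J4F R T) (hB : J5F B T) (hDT : D ⊆ T)
    (hDR : ∀ d ∈ D, K2F R (nb R T d)) (hDB : ∀ d ∈ D, K3F B (nb B T d)) :
    D.card ≤ 8 ∧ T.card + D.card ≤ 16 := by
  have h5 : D.card ≤ 8 := k3k4 (hc.mono hDT) (D_K3F hDT hDR) (D_K4F hDT hDB)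
  refine ⟨h5, ?_⟩
  rcases D.eq_empty_or_nonempty with rfl | ⟨d, hdD⟩
  · have := n45 hc hR hB
    simp; omega
  · have hdT := hDT hdD
    have a1 := card_nb hc hdT
    have a2 : (nb R T d).card ≤ 4 := k2j5 (hc.mono nb_sub) (hDR d hdD) (hB.mono nb_sub)
    have a3 : (nb B T d).card ≤ 6 := k3j4 (hc.symm.mono nb_sub) (fun x y h h' => hd x y h' h)
      (hDB d hdD) (hR.mono nb_sub)
    by_cases hT : 8 < T.card
    · have hrem := removal hDT 8 3 (by omega) (fun Q => Q3 R Q ∨ Q4 B Q) (by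
        intro U hU hU5
        by_cases hu : K3F R U
        · by_cases hu' : K4F B U
          · have := k3k4 (hc.mono hU) hu hu'
            omega
          · obtain ⟨Q, h1, h2⟩ := exists_Q4 hu'
            exact ⟨Q, h1, Or.inr h2⟩
        · obtain ⟨Q, h1, h2⟩ := exists_Q3 hu
          exact ⟨Q, h1, Or.inl h2⟩) (by
        rintro Q (h | h) <;> rw [h.card]; omega) (by
        rintro Q hQ (h | h)
        · exact h.disj hDR hQ
        · exact h.disj hDB hQ) hT
      have hcardD : (T \ D).card + D.card = T.card := Finset.card_sdiff_add_card_eq_card hDT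
      obtain ⟨r1, r2⟩ := hrem
      by_contra hcon
      have r3 := r2 (by omega)
      obtain ⟨a, ha, b, hb, x, hx, y, hy, hab, hax, hay, hbx, hby, hxy⟩ :=
        four_of_card (show 4 ≤ (T \ D).card by omega)
      have get : ∀ p ∈ T \ D, ∀ q ∈ T \ D, ∀ r ∈ T \ D, p ≠ q → p ≠ r → q ≠ r → Q3 R {p, q, r} := by
        intro p hp q hq r hr h1 h2 h3
        have hcd : ({p, q, r} : Finset V).card = 3 := Finset.card_eq_three.2 ⟨p, q, r, h1, h2, h3, rfl⟩
        rcases r3 {p, q, r} (by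
          intro u hu
          simp only [Finset.mem_insert, Finset.mem_singleton] at hu
          rcases hu with rfl | rfl | rfl <;> assumption) hcd with h | h
        · exact h
        · rw [h.card] at hcd; omega
      have g1 := (get a ha b hb x hx hab hax hbx).adj
      have g2 := (get a ha b hb y hy hab hay hby).adj
      have sub : T \ D ⊆ T := Finset.sdiff_subset
      exact hR a (sub ha) b (sub hb) x (sub hx) y (sub hy) hxy (g1 _ (by simp) _ (by simp) hab)
        (g1 _ (by simp) _ (by simp) hax) (g2 _ (by simp) _ (by simp) hay)
        (g1 _ (by simp) _ (by simp) hbx) (g2 _ (by simp) _ (by simp) hby)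
    · have := Finset.card_le_card hDT
      omega

theorem dlem55 {R B : SimpleGraph V} {T D : Finset V} (hc : Cov R B T)
    (hd : ∀ x y, R.Adj x y → ¬ B.Adj x y)
    (hR : J5F R T) (hB : J5F B T) (hDT : D ⊆ T)
    (hDR : ∀ d ∈ D, K3F R (nb R T d)) (hDB : ∀ d ∈ D, K3F B (nb B T d)) :
    D.card ≤ 17 ∧ T.card + D.card ≤ 34 := by
  have h5 : D.card ≤ 17 := k4k4 (hc.mono hDT) (D_K4F hDT hDR) (D_K4F hDT hDB)
  refine ⟨h5, ?_⟩
  rcases D.eq_empty_or_nonempty with rfl | ⟨d, hdD⟩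
  · have := n55 hc hR hB
    simp; omega
  · have hdT := hDT hdD
    have a1 := card_nb hc hdT
    have a2 : (nb R T d).card ≤ 10 := k3j5 (hc.mono nb_sub) hd (hDR d hdD) (hB.mono nb_sub)
    have a3 : (nb B T d).card ≤ 10 := k3j5 (hc.symm.mono nb_sub) (fun x y h h' => hd x y h' h)
      (hDB d hdD) (hR.mono nb_sub)
    by_cases hT : 17 < T.card
    · have hrem := removal hDT 17 4 (by omega) (fun Q => Q4 R Q ∨ Q4 B Q) (by
        intro U hU hU5
        by_cases hu : K4F R U
        · by_cases hu' : K4F B U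
          · have := k4k4 (hc.mono hU) hu hu'
            omega
          · obtain ⟨Q, h1, h2⟩ := exists_Q4 hu'
            exact ⟨Q, h1, Or.inr h2⟩
        · obtain ⟨Q, h1, h2⟩ := exists_Q4 hu
          exact ⟨Q, h1, Or.inl h2⟩) (by
        rintro Q (h | h) <;> rw [h.card]) (by
        rintro Q hQ (h | h)
        · exact h.disj hDR hQ
        · exact h.disj hDB hQ) hT
      have hcardD : (T \ D).card + D.card = T.card := Finset.card_sdiff_add_card_eq_card hDT
      obtain ⟨r1, r2⟩ := hrem
      by_contra hcon
      have r3 := r2 (by omega)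
      obtain ⟨e, he⟩ := Finset.card_pos.1 (show 0 < (T \ D).card by omega)
      obtain ⟨a, ha, b, hb, x, hx, y, hy, hab, hax, hay, hbx, hby, hxy⟩ :=
        four_of_card (show 4 ≤ ((T \ D).erase e).card by rw [Finset.card_erase_of_mem he]; omega)
      rw [Finset.mem_erase] at ha hb hx hy
      have get : ∀ y ∈ T \ D, a ≠ y → b ≠ y → x ≠ y → Q4 R {y, a, b, x} ∨ Q4 B {y, a, b, x} := by
        intro p hp h1 h2 h3
        have hcd : ({p, a, b, x} : Finset V).card = 4 := by
          rw [Finset.card_insert_of_notMem (by simp [h1.symm, h2.symm, h3.symm]),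
            Finset.card_eq_three.2 ⟨a, b, x, hab, hax, hbx, rfl⟩]
        refine r3 {p, a, b, x} (by
          intro u hu
          simp only [Finset.mem_insert, Finset.mem_singleton] at hu
          rcases hu with rfl | rfl | rfl | rfl
          · assumption
          · exact ha.2
          · exact hb.2
          · exact hx.2) hcd
      have sub : T \ D ⊆ T := Finset.sdiff_subset
      have fin : ∀ G : SimpleGraph V, J5F G T → Q4 G {y, a, b, x} → Q4 G {e, a, b, x} → False := by
        intro G hG g1 g2
        replace g1 := g1.adj
        replace g2 := g2.adj
        exact hG a (sub ha.2) b (sub hb.2) x (sub hx.2) y (sub hy.2) e (sub he) hy.1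
          (g1 _ (by simp) _ (by simp) hab) (g1 _ (by simp) _ (by simp) hax)
          (g1 _ (by simp) _ (by simp) hay) (g2 _ (by simp) _ (by simp) ha.1)
          (g1 _ (by simp) _ (by simp) hbx) (g1 _ (by simp) _ (by simp) hby)
          (g2 _ (by simp) _ (by simp) hb.1)
          (g1 _ (by simp) _ (by simp) hxy) (g2 _ (by simp) _ (by simp) hx.1)
      rcases get y hy.2 hay hby hxy with g1 | g1 <;> rcases get e he ha.1 hb.1 hx.1 with g2 | g2
      · exact fin R hR g1 g2
      · exact hd _ _ (g1.adj a (by simp) b (by simp) hab) (g2.adj a (by simp) b (by simp) hab)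
      · exact hd _ _ (g2.adj a (by simp) b (by simp) hab) (g1.adj a (by simp) b (by simp) hab)
      · exact fin B hB g1 g2
    · have := Finset.card_le_card hDT
      omega

end Ramsey

/-- the bound, multiplied by 5 -/
def GG (h t : ℕ) : ℕ :=
  (if h % 2 = 0 then (if t % 2 = 0 then 10 else 20) else (if t % 2 = 0 then 37 else 85)) *
    17 ^ (h / 2) * 5 ^ (t / 2)

theorem GG_ee (a b : ℕ) : GG (2*a) (2*b) = 10 * (17^a * 5^b) := by
  simp [GG, mul_assoc]
theorem GG_eo (a b : ℕ) : GG (2*a) (2*b+1) = 20 * (17^a * 5^b) := by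
  have : (2*b+1)/2 = b := by omega
  simp [GG, this, Nat.add_mod, mul_assoc]
theorem GG_oe (a b : ℕ) : GG (2*a+1) (2*b) = 37 * (17^a * 5^b) := by
  have : (2*a+1)/2 = a := by omega
  simp [GG, this, Nat.add_mod, mul_assoc]
theorem GG_oo (a b : ℕ) : GG (2*a+1) (2*b+1) = 85 * (17^a * 5^b) := by
  have : (2*a+1)/2 = a := by omega
  have : (2*b+1)/2 = b := by omega
  simp [GG, *, Nat.add_mod, mul_assoc]

theorem GG_rec2 (h t : ℕ) : GG (h+2) t = 17 * GG h t := by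
  have h1 : (h+2)/2 = h/2+1 := by omega
  have h2 : (h+2)%2 = h%2 := by omega
  simp only [GG, h1, h2, pow_succ]; ring
theorem GG_rec5 (h t : ℕ) : GG h (t+2) = 5 * GG h t := by
  have h1 : (t+2)/2 = t/2+1 := by omega
  have h2 : (t+2)%2 = t%2 := by omega
  simp only [GG, h1, h2, pow_succ]; ring

theorem GG_ineq (h t : ℕ) :
    10 ≤ GG h t ∧
    2 * GG h t ≤ GG h (t+1) ∧
    GG h t + GG h (t+1) ≤ GG (h+1) t ∧
    GG h (t+2) + 2 * GG (h+1) t ≤ GG (h+2) t ∧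
    GG h (t+1) + GG (h+1) t + GG (h+1) (t+1) ≤ GG (h+2) t ∧
    2 * GG h (t+1) + GG (h+1) t ≤ GG (h+1) (t+1) ∧
    8 * GG h t ≤ GG (h+1) (t+1) := by
  rw [GG_rec2, GG_rec5]
  rcases Nat.even_or_odd' h with ⟨a, rfl | rfl⟩ <;> rcases Nat.even_or_odd' t with ⟨b, rfl | rfl⟩ <;>
  have hX : 0 < 17^a * 5^b := by positivity
  · rw [GG_ee, GG_eo, GG_oe, GG_oo]; omega
  · have e1 : 2*b+1+1 = 2*b+2 := rfl
    rw [e1, GG_rec5, GG_rec5, GG_eo, GG_ee, GG_oo, GG_oe]; omega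
  · have e1 : 2*a+1+1 = 2*a+2 := rfl
    rw [e1, GG_rec2, GG_rec2, GG_oo, GG_ee, GG_oe, GG_eo]; omega
  · have e1 : 2*a+1+1 = 2*a+2 := rfl
    have e2 : 2*b+1+1 = 2*b+2 := rfl
    rw [e1, e2, GG_rec2, GG_rec2, GG_rec5, GG_rec5, GG_oo, GG_oe, GG_eo, GG_ee]; omega
section Main
open scoped Classical
variable {V K : Type*}

/-- the graph of color `i` -/
def Gc (c : V → V → K) (hs : ∀ u v, c u v = c v u) (i : K) : SimpleGraph V where
  Adj u v := u ≠ v ∧ c u v = i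
  symm := ⟨fun u v h => ⟨h.1.symm, by rw [hs]; exact h.2⟩⟩
  loopless := ⟨fun u h => h.1 rfl⟩

/-- level-`m` freeness -/
def JF (m : ℕ) (G : SimpleGraph V) (S : Finset V) : Prop :=
  if m = 5 then J5F G S else if m = 4 then J4F G S else J3F G S

theorem JF.mono {m : ℕ} {G : SimpleGraph V} {T U : Finset V} (h : JF m G T) (hU : U ⊆ T) :
    JF m G U := by
  unfold JF at *
  split_ifs at * <;> exact h.mono hU

noncomputable def cnt [Fintype K] (v : ℕ) (σ : K → ℕ) : ℕ := (Finset.univ.filter (fun i => σ i = v)).card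

theorem cnt_update [Fintype K] (v : ℕ) (σ : K → ℕ) (i : K) (w : ℕ) :
    cnt v (Function.update σ i w) + (if σ i = v then 1 else 0) =
      cnt v σ + (if w = v then 1 else 0) := by
  unfold cnt
  rw [Finset.card_filter, Finset.card_filter,
    ← Finset.add_sum_erase _ _ (Finset.mem_univ i), 
    ← Finset.add_sum_erase (a := i) _ (fun i => if σ i = v then 1 else 0) (Finset.mem_univ i)]
  have : ∑ x ∈ Finset.univ.erase i, (if Function.update σ i w x = v then 1 else 0) =
    ∑ x ∈ Finset.univ.erase i, (if σ x = v then 1 else 0) := by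
    apply Finset.sum_congr rfl
    intro x hx
    rw [Function.update_of_ne (Finset.ne_of_mem_erase hx)]
  rw [this]
  simp only [Function.update_self]
  omega

theorem JF_update {c : V → V → K} {hs : ∀ u v, c u v = c v u} {σ : K → ℕ} {A : Finset V} {i : K}
    {w : ℕ} (h : ∀ l, JF (σ l) (Gc c hs l) A) (hw : JF w (Gc c hs i) A) :
    ∀ l, JF (Function.update σ i w l) (Gc c hs l) A := by
  intro l
  by_cases hl : l = i
  · subst hl; simpa using hw
  · rw [Function.update_of_ne hl]; exact h l

def Join (G : SimpleGraph V) (A B : Finset V) : Prop := ∀ a ∈ A, ∀ b ∈ B, G.Adj a b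

theorem Join.symm {G : SimpleGraph V} {A B : Finset V} (h : Join G A B) : Join G B A :=
  fun a ha b hb => (h b hb a ha).symm

theorem K2F.toJ3 {G : SimpleGraph V} {A : Finset V} (h : K2F G A) : J3F G A :=
  fun x hx y hy _ _ _ h1 _ => h x hx y hy h1
theorem K3F.toJ4 {G : SimpleGraph V} {A : Finset V} (h : K3F G A) : J4F G A :=
  fun a ha x hx y hy _ _ _ h1 h2 _ h4 _ => h a ha x hx y hy h1 h2 h4

theorem join4a {G : SimpleGraph V} {S A B : Finset V} (hS : J4F G S) (hA : A ⊆ S) (hB : B ⊆ S)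
    (h : Join G A B) (hne : B.Nonempty) : J3F G A := by
  obtain ⟨b, hb⟩ := hne
  intro x hx y hy z hz hyz h1 h2
  exact hS b (hB hb) x (hA hx) y (hA hy) z (hA hz) hyz (h x hx b hb).symm (h y hy b hb).symm
    (h z hz b hb).symm h1 h2

theorem join4b {G : SimpleGraph V} {S A B : Finset V} (hS : J4F G S) (hA : A ⊆ S) (hB : B ⊆ S)
    (h : Join G A B) (h2 : 2 ≤ A.card) : K2F G B := by
  obtain ⟨a, ha, a', ha', hne⟩ := Finset.one_lt_card.1 h2
  intro x hx y hy hxy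
  exact hS x (hB hx) y (hB hy) a (hA ha) a' (hA ha') hne hxy (h a ha x hx).symm (h a' ha' x hx).symm
    (h a ha y hy).symm (h a' ha' y hy).symm

theorem join5a {G : SimpleGraph V} {S A B : Finset V} (hS : J5F G S) (hA : A ⊆ S) (hB : B ⊆ S)
    (h : Join G A B) (hne : B.Nonempty) : J4F G A := by
  obtain ⟨b, hb⟩ := hne
  intro a ha x hx y hy z hz hyz h1 h2 h3 h4 h5
  exact hS b (hB hb) a (hA ha) x (hA hx) y (hA hy) z (hA hz) hyz (h a ha b hb).symm
    (h x hx b hb).symm (h y hy b hb).symm (h z hz b hb).symm h1 h2 h3 h4 h5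

theorem join5b {G : SimpleGraph V} {S A B : Finset V} (hS : J5F G S) (hA : A ⊆ S) (hB : B ⊆ S)
    (h : Join G A B) (h2 : 2 ≤ A.card) : K3F G B := by
  obtain ⟨a, ha, a', ha', hne⟩ := Finset.one_lt_card.1 h2
  intro x hx y hy z hz hxy hxz hyz
  exact hS x (hB hx) y (hB hy) z (hB hz) a (hA ha) a' (hA ha') hne hxy hxz
    (h a ha x hx).symm (h a' ha' x hx).symm hyz
    (h a ha y hy).symm (h a' ha' y hy).symm (h a ha z hz).symm (h a' ha' z hz).symm

theorem join5c {G : SimpleGraph V} {S A B : Finset V} (hS : J5F G S) (hA : A ⊆ S) (hB : B ⊆ S)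
    (h : Join G A B) (h3 : ¬ J3F G A) : K2F G B := by
  intro b hb b' hb' hbb
  apply h3
  intro x hx y hy z hz hyz h1 h2
  exact hS b (hB hb) b' (hB hb') x (hA hx) y (hA hy) z (hA hz) hyz hbb
    (h x hx b hb).symm (h y hy b hb).symm (h z hz b hb).symm
    (h x hx b' hb').symm (h y hy b' hb').symm (h z hz b' hb').symm h1 h2

/-- the reduced-partition data -/
structure GPart (c : V → V → K) (S : Finset V) (p : V → V) (i j : K) : Prop where
  hij : i ≠ j
  mem : ∀ x ∈ S, p x ∈ S
  idem : ∀ x ∈ S, p (p x) = p x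
  col : ∀ x ∈ S, ∀ y ∈ S, p x ≠ p y → c x y = c (p x) (p y)
  two : 2 ≤ (S.image p).card
  cov : ∀ x ∈ S.image p, ∀ y ∈ S.image p, x ≠ y → c x y = i ∨ c x y = j
  cut : ∀ X ⊆ S.image p, X.Nonempty → (∃ y ∈ S.image p, y ∉ X) → ∀ l,
        ∃ u ∈ X, ∃ w ∈ S.image p, w ∉ X ∧ c u w ≠ l

theorem GPart.swap {c : V → V → K} {S : Finset V} {p : V → V} {i j : K} (P : GPart c S p i j) :
    GPart c S p j i :=
  ⟨P.hij.symm, P.mem, P.idem, P.col, P.two, fun x hx y hy h => (P.cov x hx y hy h).symm, P.cut⟩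

noncomputable def cl (S : Finset V) (p : V → V) (d : V) : Finset V := S.filter (fun x => p x = d)
noncomputable def Nr (c : V → V → K) (S : Finset V) (p : V → V) (d : V) (i : K) : Finset V :=
  S.filter (fun x => p x ≠ d ∧ c d (p x) = i)

theorem GPart.fix {c : V → V → K} {S : Finset V} {p : V → V} {i j : K} (P : GPart c S p i j) {d : V}
    (hd : d ∈ S.image p) : d ∈ S ∧ p d = d := by
  obtain ⟨x, hx, rfl⟩ := Finset.mem_image.1 hd
  exact ⟨P.mem x hx, P.idem x hx⟩

theorem GPart.card {c : V → V → K} {S : Finset V} {p : V → V} {i j : K} (P : GPart c S p i j) {d : V}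
    (hd : d ∈ S.image p) : S.card = (cl S p d).card + (Nr c S p d i).card + (Nr c S p d j).card := by
  have hij := P.hij
  rw [← Finset.card_union_of_disjoint, ← Finset.card_union_of_disjoint]
  · congr 1
    ext x
    simp only [cl, Nr, Finset.mem_union, Finset.mem_filter]
    constructor
    · intro hx
      by_cases h : p x = d
      · exact Or.inl (Or.inl ⟨hx, h⟩)
      · rcases P.cov d hd (p x) (Finset.mem_image_of_mem p hx) (Ne.symm h) with h' | h'
        · exact Or.inl (Or.inr ⟨hx, h, h'⟩)
        · exact Or.inr ⟨hx, h, h'⟩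
    · tauto
  · rw [Finset.disjoint_left]
    intro x hx
    simp only [cl, Nr, Finset.mem_union, Finset.mem_filter] at *
    rintro ⟨_, h1, h2⟩
    rcases hx with h | h
    · exact h1 h.2
    · exact hij (h.2.2.symm.trans h2)
  · rw [Finset.disjoint_left]
    intro x hx
    simp only [cl, Nr, Finset.mem_filter] at *
    tauto

theorem GPart.join {c : V → V → K} (hs : ∀ u v, c u v = c v u) {S : Finset V} {p : V → V} {i j : K}
    (P : GPart c S p i j) {d : V} (l : K) :
    Join (Gc c hs l) (cl S p d) (Nr c S p d l) := by
  intro a ha b hb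
  simp only [cl, Nr, Finset.mem_filter] at ha hb
  obtain ⟨ha, rfl⟩ := ha
  refine ⟨?_, ?_⟩
  · rintro rfl; exact hb.2.1 rfl
  · rw [P.col a ha b hb.1 (Ne.symm hb.2.1)]; exact hb.2.2

theorem GPart.nbr {c : V → V → K} {S : Finset V} {p : V → V} {i j : K}
    (P : GPart c S p i j) {d : V} (hd : d ∈ S.image p) :
    ∃ y ∈ S.image p, y ≠ d ∧ c d y = i := by
  obtain ⟨x, hx, y, hy, hxy⟩ := Finset.one_lt_card.1 P.two
  obtain ⟨u, hu, w, hw, h1, h2⟩ := P.cut {d} (by simpa using hd) (by simp) (by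
    by_cases h : x = d
    · exact ⟨y, hy, by simp; rintro rfl; exact hxy h⟩
    · exact ⟨x, hx, by simpa using h⟩) j
  simp only [Finset.mem_singleton] at hu h1
  subst hu
  refine ⟨w, hw, h1, ?_⟩
  rcases P.cov u hd w hw (Ne.symm h1) with h | h
  · exact h
  · exact absurd h h2

theorem GPart.Nr_ne {c : V → V → K} {S : Finset V} {p : V → V} {i j : K}
    (P : GPart c S p i j) {d : V} (hd : d ∈ S.image p) : (Nr c S p d i).Nonempty := by
  obtain ⟨y, hy, h1, h2⟩ := P.nbr hd
  obtain ⟨hy1, hy2⟩ := P.fix hy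
  exact ⟨y, by simp only [Nr, Finset.mem_filter]; exact ⟨hy1, by rw [hy2]; exact h1, by rw [hy2]; exact h2⟩⟩

theorem GPart.cl_ne {c : V → V → K} {S : Finset V} {p : V → V} {i j : K}
    (P : GPart c S p i j) {d : V} (hd : d ∈ S.image p) : (cl S p d).Nonempty := by
  obtain ⟨h1, h2⟩ := P.fix hd
  exact ⟨d, by simp only [cl, Finset.mem_filter]; exact ⟨h1, h2⟩⟩

theorem cl_sub {S : Finset V} {p : V → V} {d : V} : cl S p d ⊆ S := Finset.filter_subset _ _
theorem Nr_sub {c : V → V → K} {S : Finset V} {p : V → V} {d : V} {i : K} : Nr c S p d i ⊆ S :=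
  Finset.filter_subset _ _

theorem GPart.not3 {c : V → V → K} (hs : ∀ u v, c u v = c v u) {S : Finset V} {p : V → V} {i j : K}
    (P : GPart c S p i j) (h : J3F (Gc c hs i) S) : False := by
  obtain ⟨d, hd, -⟩ := Finset.one_lt_card.1 P.two
  obtain ⟨y, hy, h1, h2⟩ := P.nbr hd
  have hdS := (P.fix hd).1
  have hyS := (P.fix hy).1
  by_cases hz : ∃ z ∈ S.image p, z ∉ ({d, y} : Finset V)
  · obtain ⟨u, hu, w, hw, hw1, hw2⟩ := P.cut {d, y}
      (by intro a; simp only [Finset.mem_insert, Finset.mem_singleton]; rintro (rfl | rfl) <;> assumption)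
      (by simp) hz j
    have hwS := (P.fix hw).1
    simp only [Finset.mem_insert, Finset.mem_singleton, not_or] at hu hw1
    have huT : u ∈ S.image p := by rcases hu with rfl | rfl <;> assumption
    have huw : u ≠ w := by rcases hu with rfl | rfl <;> tauto
    have hcu : c u w = i := (P.cov u huT w hw huw).resolve_right hw2
    rcases hu with rfl | rfl
    · exact h u hdS y hyS w hwS (fun e => hw1.2 e.symm) ⟨Ne.symm h1, h2⟩ ⟨huw, hcu⟩
    · exact h u hyS d hdS w hwS (fun e => hw1.1 e.symm) ⟨h1, by rw [hs]; exact h2⟩ ⟨huw, hcu⟩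
  · push Not at hz
    obtain ⟨u, hu, w, hw, hw1, hw2⟩ := P.cut {d} (by simpa using hd) (by simp) ⟨y, hy, by simpa using h1⟩ i
    have := hz w hw
    simp only [Finset.mem_insert, Finset.mem_singleton] at *
    subst hu
    rcases this with rfl | rfl
    · exact hw1 rfl
    · exact hw2 h2

theorem GPart.sum {c : V → V → K} {S : Finset V} {p : V → V} {i j : K}
    (_ : GPart c S p i j) {g N : ℕ} (hg : 10 ≤ g) (hcl : ∀ d ∈ S.image p, 5 * (cl S p d).card ≤ g)
    (hD : ((S.image p).filter (fun d => 2 ≤ (cl S p d).card)).card ≤ N)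
    (hT : (S.image p).card + ((S.image p).filter (fun d => 2 ≤ (cl S p d).card)).card ≤ 2 * N) :
    5 * S.card ≤ N * g := by
  have h1 : S.card = ∑ d ∈ S.image p, (cl S p d).card := Finset.card_eq_sum_card_image p S
  have h2 : 5 * S.card ≤ ∑ d ∈ S.image p, if 2 ≤ (cl S p d).card then g else 5 := by
    rw [h1, Finset.mul_sum]
    apply Finset.sum_le_sum
    intro d hd
    split_ifs with h
    · exact hcl d hd
    · omega
  rw [Finset.sum_ite, Finset.sum_const, Finset.sum_const, smul_eq_mul, smul_eq_mul] at h2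
  have h3 := Finset.card_filter_add_card_filter_not (s := S.image p) (fun d => 2 ≤ (cl S p d).card)
  set D := ((S.image p).filter (fun d => 2 ≤ (cl S p d).card)).card
  set E := ((S.image p).filter (fun d => ¬ 2 ≤ (cl S p d).card)).card
  obtain ⟨m, rfl⟩ := Nat.exists_eq_add_of_le hD
  have : E ≤ 2 * m := by omega
  nlinarith [Nat.mul_le_mul_left m hg]

theorem GPart.cv {c : V → V → K} (hs : ∀ u v, c u v = c v u) {S : Finset V} {p : V → V} {i j : K}
    (P : GPart c S p i j) : Cov (Gc c hs i) (Gc c hs j) (S.image p) := by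
  intro x hx y hy hxy
  rcases P.cov x hx y hy hxy with h | h
  · exact Or.inl ⟨hxy, h⟩
  · exact Or.inr ⟨hxy, h⟩

theorem GPart.sub {c : V → V → K} {S : Finset V} {p : V → V} {i j : K}
    (P : GPart c S p i j) : S.image p ⊆ S := fun _ hx => (P.fix hx).1

theorem GPart.nbsub {c : V → V → K} (hs : ∀ u v, c u v = c v u) {S : Finset V} {p : V → V} {i j : K}
    (P : GPart c S p i j) (d : V) (l : K) : nb (Gc c hs l) (S.image p) d ⊆ Nr c S p d l := by
  intro x hx
  rw [mem_nb] at hx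
  obtain ⟨h1, h2⟩ := P.fix hx.1
  simp only [Nr, Finset.mem_filter]
  rw [h2]
  exact ⟨h1, fun e => hx.2.1 e.symm, hx.2.2⟩

theorem GPart.disj {c : V → V → K} (hs : ∀ u v, c u v = c v u) {S : Finset V} {p : V → V} {i j : K}
    (P : GPart c S p i j) : ∀ x y, (Gc c hs i).Adj x y → ¬ (Gc c hs j).Adj x y :=
  fun _ _ h1 h2 => P.hij (h1.2.symm.trans h2.2)

theorem case44 {c : V → V → K} (hs : ∀ u v, c u v = c v u) {S : Finset V} {p : V → V} {i j : K}
    (P : GPart c S p i j) (hi : J4F (Gc c hs i) S) (hj : J4F (Gc c hs j) S) {g : ℕ} (hg : 10 ≤ g)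
    (hcl : ∀ d ∈ S.image p, 5 * (cl S p d).card ≤ g) : 5 * S.card ≤ 5 * g := by
  obtain ⟨h1, h2⟩ := dlem44 (P.cv hs) (hi.mono P.sub) (hj.mono P.sub)
    (Finset.filter_subset (fun d => 2 ≤ (cl S p d).card) (S.image p))
    (fun d hd x hx y hy => join4b hi cl_sub Nr_sub (P.join hs i) (Finset.mem_filter.1 hd).2
      x (P.nbsub hs d i hx) y (P.nbsub hs d i hy))
    (fun d hd x hx y hy => join4b hj cl_sub Nr_sub (P.join hs j) (Finset.mem_filter.1 hd).2
      x (P.nbsub hs d j hx) y (P.nbsub hs d j hy))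
  exact P.sum hg hcl h1 h2

theorem case45 {c : V → V → K} (hs : ∀ u v, c u v = c v u) {S : Finset V} {p : V → V} {i j : K}
    (P : GPart c S p i j) (hi : J4F (Gc c hs i) S) (hj : J5F (Gc c hs j) S) {g : ℕ} (hg : 10 ≤ g)
    (hcl : ∀ d ∈ S.image p, 5 * (cl S p d).card ≤ g) : 5 * S.card ≤ 8 * g := by
  obtain ⟨h1, h2⟩ := dlem45 (P.cv hs) (P.disj hs) (hi.mono P.sub) (hj.mono P.sub)
    (Finset.filter_subset (fun d => 2 ≤ (cl S p d).card) (S.image p))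
    (fun d hd x hx y hy => join4b hi cl_sub Nr_sub (P.join hs i) (Finset.mem_filter.1 hd).2
      x (P.nbsub hs d i hx) y (P.nbsub hs d i hy))
    (fun d hd => (join5b hj cl_sub Nr_sub (P.join hs j) (Finset.mem_filter.1 hd).2).mono (P.nbsub hs d j))
  exact P.sum hg hcl h1 h2

theorem case55 {c : V → V → K} (hs : ∀ u v, c u v = c v u) {S : Finset V} {p : V → V} {i j : K}
    (P : GPart c S p i j) (hi : J5F (Gc c hs i) S) (hj : J5F (Gc c hs j) S) {g : ℕ} (hg : 10 ≤ g)
    (hcl : ∀ d ∈ S.image p, 5 * (cl S p d).card ≤ g) : 5 * S.card ≤ 17 * g := by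
  obtain ⟨h1, h2⟩ := dlem55 (P.cv hs) (P.disj hs) (hi.mono P.sub) (hj.mono P.sub)
    (Finset.filter_subset (fun d => 2 ≤ (cl S p d).card) (S.image p))
    (fun d hd => (join5b hi cl_sub Nr_sub (P.join hs i) (Finset.mem_filter.1 hd).2).mono (P.nbsub hs d i))
    (fun d hd => (join5b hj cl_sub Nr_sub (P.join hs j) (Finset.mem_filter.1 hd).2).mono (P.nbsub hs d j))
  exact P.sum hg hcl h1 h2

theorem c53 [Fintype K] {σ : K → ℕ} {i : K} (h : σ i = 5) :
    cnt 5 (Function.update σ i 3) + 1 = cnt 5 σ ∧ cnt 4 (Function.update σ i 3) = cnt 4 σ := by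
  have h1 := cnt_update 5 σ i 3
  have h2 := cnt_update 4 σ i 3
  simp [h] at h1 h2
  exact ⟨h1, h2⟩
theorem c54 [Fintype K] {σ : K → ℕ} {i : K} (h : σ i = 5) :
    cnt 5 (Function.update σ i 4) + 1 = cnt 5 σ ∧ cnt 4 (Function.update σ i 4) = cnt 4 σ + 1 := by
  have h1 := cnt_update 5 σ i 4
  have h2 := cnt_update 4 σ i 4
  simp [h] at h1 h2
  exact ⟨h1, h2⟩
theorem c43 [Fintype K] {σ : K → ℕ} {i : K} (h : σ i = 4) :
    cnt 5 (Function.update σ i 3) = cnt 5 σ ∧ cnt 4 (Function.update σ i 3) + 1 = cnt 4 σ := by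
  have h1 := cnt_update 5 σ i 3
  have h2 := cnt_update 4 σ i 3
  simp [h] at h1 h2
  exact ⟨h1, h2⟩

theorem JF5 {G : SimpleGraph V} {S : Finset V} {m : ℕ} (h : JF m G S) (hm : m = 5) : J5F G S := by
  simpa [JF, hm] using h
theorem JF4 {G : SimpleGraph V} {S : Finset V} {m : ℕ} (h : JF m G S) (hm : m = 4) : J4F G S := by
  simpa [JF, hm] using h
theorem toJF4 {G : SimpleGraph V} {S : Finset V} (h : J4F G S) : JF 4 G S := by
  simpa [JF] using h
theorem toJF3 {G : SimpleGraph V} {S : Finset V} (h : J3F G S) : JF 3 G S := by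
  simpa [JF] using h

/-- induction hypothesis -/
def IHyp [Fintype K] (c : V → V → K) (hs : ∀ u v, c u v = c v u) (n : ℕ) : Prop :=
  ∀ A : Finset V, A.card < n → ∀ (σ : K → ℕ) (h t : ℕ), (∀ l, JF (σ l) (Gc c hs l) A) →
    cnt 5 σ = h → cnt 4 σ = t → 5 * A.card ≤ GG h t

theorem main55 [Fintype K] {c : V → V → K} (hs : ∀ u v, c u v = c v u) {S : Finset V} {p : V → V}
    {i j : K} (P : GPart c S p i j) {σ : K → ℕ} (hσ : ∀ l, JF (σ l) (Gc c hs l) S)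
    (hi : σ i = 5) (hj : σ j = 5) (IH : IHyp c hs S.card) :
    5 * S.card ≤ GG (cnt 5 σ) (cnt 4 σ) := by
  have hij := P.hij
  have Hi := JF5 (hσ i) hi
  have Hj := JF5 (hσ j) hj
  obtain ⟨a1, a2⟩ := c53 hi
  obtain ⟨a3, a4⟩ := c54 hi
  obtain ⟨b1, b2⟩ := c53 hj
  obtain ⟨b3, b4⟩ := c54 hj
  have e3 : Function.update σ i 3 j = 5 := by rw [Function.update_of_ne (Ne.symm hij)]; exact hj
  have e4 : Function.update σ i 4 j = 5 := by rw [Function.update_of_ne (Ne.symm hij)]; exact hj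
  obtain ⟨d1, d2⟩ := c53 e3
  obtain ⟨d3, d4⟩ := c54 e3
  obtain ⟨d5, d6⟩ := c53 e4
  obtain ⟨d7, d8⟩ := c54 e4
  obtain ⟨h, hh⟩ : ∃ h, cnt 5 σ = h + 2 := ⟨cnt 5 (Function.update (Function.update σ i 3) j 3), by omega⟩
  obtain ⟨t, ht⟩ : ∃ t, cnt 4 σ = t := ⟨_, rfl⟩
  rw [hh, ht]
  obtain ⟨-, -, -, q1, q2, -, -⟩ := GG_ineq h t
  have hA : ∀ {A : Finset V}, A ⊆ S → ∀ l, JF (σ l) (Gc c hs l) A := fun hA l => (hσ l).mono hA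
  by_cases hex : ∃ d ∈ S.image p, ¬ J3F (Gc c hs i) (cl S p d) ∨ ¬ J3F (Gc c hs j) (cl S p d)
  · obtain ⟨d, hd, hex⟩ := hex
    have hcard := P.card hd
    have n1 := (P.Nr_ne hd).card_pos
    have n2 := (P.swap.Nr_ne hd).card_pos
    have n3 := (P.cl_ne hd).card_pos
    have c2 : 2 ≤ (cl S p d).card := by
      by_contra hc
      have hsub := Finset.card_le_one.1 (by omega : (cl S p d).card ≤ 1)
      rcases hex with hex | hex <;>
      exact hex fun x hx y hy z hz hyz _ _ => hyz (hsub y hy z hz)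
    have vi := join5a Hi cl_sub Nr_sub (P.join hs i) (P.Nr_ne hd)
    have vj := join5a Hj cl_sub Nr_sub (P.join hs j) (P.swap.Nr_ne hd)
    have ri := (join5b Hi cl_sub Nr_sub (P.join hs i) c2).toJ4
    have rj := (join5b Hj cl_sub Nr_sub (P.join hs j) c2).toJ4
    by_cases pi : J3F (Gc c hs i) (cl S p d)
    · have pj : ¬ J3F (Gc c hs j) (cl S p d) := by tauto
      have rj' := (join5c Hj cl_sub Nr_sub (P.join hs j) pj).toJ3
      have k1 := IH (cl S p d) (by omega) _ h (t+1)
        (JF_update (JF_update (hA cl_sub) (toJF3 pi)) (toJF4 vj)) (by omega) (by omega)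
      have k2 := IH (Nr c S p d j) (by omega) _ (h+1) t
        (JF_update (hA Nr_sub) (toJF3 rj')) (by omega) (by omega)
      have k3 := IH (Nr c S p d i) (by omega) _ (h+1) (t+1)
        (JF_update (hA Nr_sub) (toJF4 ri)) (by omega) (by omega)
      omega
    · have ri' := (join5c Hi cl_sub Nr_sub (P.join hs i) pi).toJ3
      have k2 := IH (Nr c S p d i) (by omega) _ (h+1) t
        (JF_update (hA Nr_sub) (toJF3 ri')) (by omega) (by omega)
      by_cases pj : J3F (Gc c hs j) (cl S p d)
      · have k1 := IH (cl S p d) (by omega) _ h (t+1)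
          (JF_update (JF_update (hA cl_sub) (toJF4 vi)) (toJF3 pj)) (by omega) (by omega)
        have k3 := IH (Nr c S p d j) (by omega) _ (h+1) (t+1)
          (JF_update (hA Nr_sub) (toJF4 rj)) (by omega) (by omega)
        omega
      · have rj' := (join5c Hj cl_sub Nr_sub (P.join hs j) pj).toJ3
        have k1 := IH (cl S p d) (by omega) _ h (t+2)
          (JF_update (JF_update (hA cl_sub) (toJF4 vi)) (toJF4 vj)) (by omega) (by omega)
        have k3 := IH (Nr c S p d j) (by omega) _ (h+1) t
          (JF_update (hA Nr_sub) (toJF3 rj')) (by omega) (by omega)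
        omega
  · push Not at hex
    rw [GG_rec2]
    refine case55 hs P Hi Hj (GG_ineq h t).1 ?_
    intro d hd
    have hcard := P.card hd
    have n1 := (P.Nr_ne hd).card_pos
    exact IH (cl S p d) (by omega) _ h t
      (JF_update (JF_update (hA cl_sub) (toJF3 (hex d hd).1)) (toJF3 (hex d hd).2)) (by omega) (by omega)

theorem main45 [Fintype K] {c : V → V → K} (hs : ∀ u v, c u v = c v u) {S : Finset V} {p : V → V}
    {i j : K} (P : GPart c S p i j) {σ : K → ℕ} (hσ : ∀ l, JF (σ l) (Gc c hs l) S)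
    (hi : σ i = 4) (hj : σ j = 5) (IH : IHyp c hs S.card) :
    5 * S.card ≤ GG (cnt 5 σ) (cnt 4 σ) := by
  have hij := P.hij
  have Hi := JF4 (hσ i) hi
  have Hj := JF5 (hσ j) hj
  obtain ⟨a1, a2⟩ := c43 hi
  obtain ⟨b1, b2⟩ := c53 hj
  have e3 : Function.update σ i 3 j = 5 := by rw [Function.update_of_ne (Ne.symm hij)]; exact hj
  obtain ⟨d1, d2⟩ := c53 e3
  obtain ⟨d3, d4⟩ := c54 e3
  obtain ⟨h, hh⟩ : ∃ h, cnt 5 σ = h + 1 := ⟨cnt 5 (Function.update σ j 3), by omega⟩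
  obtain ⟨t, ht⟩ : ∃ t, cnt 4 σ = t + 1 := ⟨cnt 4 (Function.update σ i 3), by omega⟩
  rw [hh, ht]
  obtain ⟨q0, -, -, -, -, q1, q2⟩ := GG_ineq h t
  have hA : ∀ {A : Finset V}, A ⊆ S → ∀ l, JF (σ l) (Gc c hs l) A := fun hA l => (hσ l).mono hA
  by_cases hex : ∃ d ∈ S.image p, ¬ J3F (Gc c hs j) (cl S p d)
  · obtain ⟨d, hd, pj⟩ := hex
    have hcard := P.card hd
    have n1 := (P.Nr_ne hd).card_pos
    have n2 := (P.swap.Nr_ne hd).card_pos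
    have n3 := (P.cl_ne hd).card_pos
    have c2 : 2 ≤ (cl S p d).card := by
      by_contra hc
      have hsub := Finset.card_le_one.1 (by omega : (cl S p d).card ≤ 1)
      exact pj fun x hx y hy z hz hyz _ _ => hyz (hsub y hy z hz)
    have vi := join4a Hi cl_sub Nr_sub (P.join hs i) (P.Nr_ne hd)
    have vj := join5a Hj cl_sub Nr_sub (P.join hs j) (P.swap.Nr_ne hd)
    have ri := (join4b Hi cl_sub Nr_sub (P.join hs i) c2).toJ3
    have rj := (join5c Hj cl_sub Nr_sub (P.join hs j) pj).toJ3
    have k1 := IH (cl S p d) (by omega) _ h (t+1)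
        (JF_update (JF_update (hA cl_sub) (toJF3 vi)) (toJF4 vj)) (by omega) (by omega)
    have k2 := IH (Nr c S p d j) (by omega) _ h (t+1)
        (JF_update (hA Nr_sub) (toJF3 rj)) (by omega) (by omega)
    have k3 := IH (Nr c S p d i) (by omega) _ (h+1) t
        (JF_update (hA Nr_sub) (toJF3 ri)) (by omega) (by omega)
    omega
  · push Not at hex
    refine le_trans (case45 hs P Hi Hj (GG_ineq h t).1 ?_) q2
    intro d hd
    have hcard := P.card hd
    have n1 := (P.Nr_ne hd).card_pos
    have vi := join4a Hi cl_sub Nr_sub (P.join hs i) (P.Nr_ne hd)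
    exact IH (cl S p d) (by omega) _ h t
      (JF_update (JF_update (hA cl_sub) (toJF3 vi)) (toJF3 (hex d hd))) (by omega) (by omega)

theorem main44 [Fintype K] {c : V → V → K} (hs : ∀ u v, c u v = c v u) {S : Finset V} {p : V → V}
    {i j : K} (P : GPart c S p i j) {σ : K → ℕ} (hσ : ∀ l, JF (σ l) (Gc c hs l) S)
    (hi : σ i = 4) (hj : σ j = 4) (IH : IHyp c hs S.card) :
    5 * S.card ≤ GG (cnt 5 σ) (cnt 4 σ) := by
  have hij := P.hij
  have Hi := JF4 (hσ i) hi
  have Hj := JF4 (hσ j) hj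
  obtain ⟨a1, a2⟩ := c43 hi
  have e3 : Function.update σ i 3 j = 4 := by rw [Function.update_of_ne (Ne.symm hij)]; exact hj
  obtain ⟨d1, d2⟩ := c43 e3
  obtain ⟨h, hh⟩ : ∃ h, cnt 5 σ = h := ⟨_, rfl⟩
  obtain ⟨t, ht⟩ : ∃ t, cnt 4 σ = t + 2 := ⟨cnt 4 (Function.update (Function.update σ i 3) j 3), by omega⟩
  rw [hh, ht, GG_rec5]
  have hA : ∀ {A : Finset V}, A ⊆ S → ∀ l, JF (σ l) (Gc c hs l) A := fun hA l => (hσ l).mono hA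
  refine case44 hs P Hi Hj (GG_ineq h t).1 ?_
  intro d hd
  have hcard := P.card hd
  have n1 := (P.Nr_ne hd).card_pos
  have vi := join4a Hi cl_sub Nr_sub (P.join hs i) (P.Nr_ne hd)
  have vj := join4a Hj cl_sub Nr_sub (P.join hs j) (P.swap.Nr_ne hd)
  exact IH (cl S p d) (by omega) _ h t
    (JF_update (JF_update (hA cl_sub) (toJF3 vi)) (toJF3 vj)) (by omega) (by omega)

theorem mainAB [Fintype K] {c : V → V → K} (hs : ∀ u v, c u v = c v u) {S A B : Finset V}
    {i : K} (hA : A.Nonempty) (hB : B.Nonempty) (hdis : Disjoint A B) (hAB : A ∪ B = S)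
    (hc : ∀ a ∈ A, ∀ b ∈ B, c a b = i) {σ : K → ℕ} (hσ : ∀ l, JF (σ l) (Gc c hs l) S)
    (IH : IHyp c hs S.card) :
    5 * S.card ≤ GG (cnt 5 σ) (cnt 4 σ) := by
  have hJ : Join (Gc c hs i) A B := fun a ha b hb =>
    ⟨fun e => Finset.disjoint_left.1 hdis ha (e ▸ hb), hc a ha b hb⟩
  have hcard : S.card = A.card + B.card := by rw [← hAB, Finset.card_union_of_disjoint hdis]
  have hAS : A ⊆ S := hAB ▸ Finset.subset_union_left
  have hBS : B ⊆ S := hAB ▸ Finset.subset_union_right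
  have hm : ∀ {A : Finset V}, A ⊆ S → ∀ l, JF (σ l) (Gc c hs l) A := fun hA l => (hσ l).mono hA
  have n1 := hA.card_pos
  have n2 := hB.card_pos
  by_cases h5 : σ i = 5
  · have Hi := JF5 (hσ i) h5
    obtain ⟨a1, a2⟩ := c53 h5
    obtain ⟨a3, a4⟩ := c54 h5
    obtain ⟨h, hh⟩ : ∃ h, cnt 5 σ = h + 1 := ⟨_, a1.symm⟩
    obtain ⟨t, ht⟩ : ∃ t, cnt 4 σ = t := ⟨_, rfl⟩
    rw [hh, ht]
    obtain ⟨-, -, q, -⟩ := GG_ineq h t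
    by_cases hp : J3F (Gc c hs i) A
    · have k1 := IH A (by omega) _ h t (JF_update (hm hAS) (toJF3 hp)) (by omega) (by omega)
      have k2 := IH B (by omega) _ h (t+1) (JF_update (hm hBS) (toJF4 (join5a Hi hBS hAS hJ.symm hA)))
        (by omega) (by omega)
      omega
    · have k1 := IH B (by omega) _ h t (JF_update (hm hBS) (toJF3 (join5c Hi hAS hBS hJ hp).toJ3))
        (by omega) (by omega)
      have k2 := IH A (by omega) _ h (t+1) (JF_update (hm hAS) (toJF4 (join5a Hi hAS hBS hJ hB)))
        (by omega) (by omega)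
      omega
  by_cases h4 : σ i = 4
  · have Hi := JF4 (hσ i) h4
    obtain ⟨a1, a2⟩ := c43 h4
    obtain ⟨h, hh⟩ : ∃ h, cnt 5 σ = h := ⟨_, rfl⟩
    obtain ⟨t, ht⟩ : ∃ t, cnt 4 σ = t + 1 := ⟨_, a2.symm⟩
    rw [hh, ht]
    obtain ⟨-, q, -⟩ := GG_ineq h t
    have k1 := IH A (by omega) _ h t (JF_update (hm hAS) (toJF3 (join4a Hi hAS hBS hJ hB))) (by omega) (by omega)
    have k2 := IH B (by omega) _ h t (JF_update (hm hBS) (toJF3 (join4a Hi hBS hAS hJ.symm hA))) (by omega) (by omega)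
    omega
  have Hi : J3F (Gc c hs i) S := by simpa [JF, h5, h4] using hσ i
  obtain ⟨q, -⟩ := GG_ineq (cnt 5 σ) (cnt 4 σ)
  obtain ⟨a, ha⟩ := hA
  obtain ⟨b, hb⟩ := hB
  have u1 : A.card ≤ 1 := by
    rw [Finset.card_le_one]
    intro x hx y hy
    by_contra hxy
    exact Hi b (hBS hb) x (hAS hx) y (hAS hy) hxy (hJ x hx b hb).symm (hJ y hy b hb).symm
  have u2 : B.card ≤ 1 := by
    rw [Finset.card_le_one]
    intro x hx y hy
    by_contra hxy
    exact Hi a (hAS ha) x (hBS hx) y (hBS hy) hxy (hJ a ha x hx) (hJ a ha y hy)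
  omega

theorem main_upper [Fintype K] {c : V → V → K} (hs : ∀ u v, c u v = c v u) (hr : NoRb c) (n : ℕ) :
    ∀ S : Finset V, S.card = n → ∀ σ : K → ℕ, (∀ l, JF (σ l) (Gc c hs l) S) →
      5 * S.card ≤ GG (cnt 5 σ) (cnt 4 σ) := by
  induction n using Nat.strong_induction_on with
  | _ n ih =>
  intro S hS σ hσ
  have IH : IHyp c hs S.card := by
    intro A hA σ h t hσ e1 e2
    subst e1 e2
    exact ih A.card (hS ▸ hA) A rfl σ hσ
  by_cases h2 : 2 ≤ S.card
  · rcases gallai hs hr S h2 with ⟨A, B, i, hA, hB, hd, hAB, hc⟩ | ⟨p, i, j, hij, ⟨v1, v2, v3⟩, hcov, hcut⟩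
    · exact mainAB hs hA hB hd hAB hc hσ IH
    · have P : GPart c S p i j := ⟨hij, fun x hx => (v1 x hx).1, fun x hx => (v1 x hx).2, v2, v3, hcov, hcut⟩
      have key : ∀ {i j}, GPart c S p i j → σ i = 5 ∨ σ i = 4 := by
        intro i j P
        by_contra hcon
        rw [not_or] at hcon
        exact P.not3 hs (by simpa [JF, hcon.1, hcon.2] using hσ i)
      rcases key P with hi | hi <;> rcases key P.swap with hj | hj
      · exact main55 hs P hσ hi hj IH
      · exact main45 hs P.swap hσ hj hi IH
      · exact main45 hs P hσ hi hj IH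
      · exact main44 hs P hσ hi hj IH
  · have := (GG_ineq (cnt 5 σ) (cnt 4 σ)).1
    omega
end Main
section Lower

structure Low (r s q : ℕ) {V : Type} (c : V → V → ℕ) : Prop where
  symm : ∀ u v, c u v = c v u
  norb : NoRb c
  lo : ∀ u v, q ≤ c u v
  hi : ∀ u v, c u v ≤ r + s
  diag : ∀ v, c v v = r + s
  k4 : ∀ l < r, ∀ a x y z, c a x = l → c a y = l → c a z = l → c x y = l → c x z = l → c y z = l → False
  k3 : ∀ l, r ≤ l → l < r + s → ∀ x y z, c x y = l → c x z = l → c y z = l → False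
  p3 : ∀ x y z, x ≠ y → x ≠ z → y ≠ z → c x y = r + s → c x z = r + s → False

def lexc {W V : Type} [DecidableEq W] (b : W → W → Bool) (c : V → V → ℕ) (q : ℕ) :
    W × V → W × V → ℕ :=
  fun u v => if u.1 = v.1 then c u.2 v.2 else if b u.1 v.1 then q else q + 1

theorem low_step {r s q : ℕ} {W V : Type} [DecidableEq W] {b : W → W → Bool} {c : V → V → ℕ}
    (h : Low r s (q + 2) c) (hb : ∀ u v, b u v = b v u)
    (h4 : q + 2 ≤ r → ∀ e, ∀ a x y z, a ≠ x → a ≠ y → a ≠ z → x ≠ y → x ≠ z → y ≠ z →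
      b a x = e → b a y = e → b a z = e → b x y = e → b x z = e → b y z = e → False)
    (h3 : r ≤ q → ∀ e, ∀ x y z, x ≠ y → x ≠ z → y ≠ z →
      b x y = e → b x z = e → b y z = e → False)
    (hq : q + 2 ≤ r ∨ r ≤ q) (hqs : q + 2 ≤ r + s) : Low r s q (lexc b c q) := by
  have hsame : ∀ {l u v}, q + 2 ≤ l → lexc b c q u v = l → u.1 = v.1 ∧ c u.2 v.2 = l := by
    intro l u v hl hc
    unfold lexc at hc
    split_ifs at hc with h1 h2
    · exact ⟨h1, hc⟩
    · omega
    · omega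
  have hdiff : ∀ {l u v}, l < q + 2 → lexc b c q u v = l → u.1 ≠ v.1 ∧ b u.1 v.1 = decide (l = q) := by
    intro l u v hl hc
    unfold lexc at hc
    split_ifs at hc with h1 h2
    · have := h.lo u.2 v.2; omega
    · refine ⟨h1, ?_⟩; rw [h2]; simp [hc]
    · refine ⟨h1, ?_⟩
      have : l ≠ q := by omega
      simp [this, h2]
  refine ⟨?_, ?_, ?_, ?_, ?_, ?_, ?_, ?_⟩
  · intro u v
    unfold lexc
    rw [hb u.1 v.1, h.symm u.2 v.2]
    simp only [eq_comm]
  · intro u v w huv huw hvw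
    obtain ⟨u1, u2⟩ := u
    obtain ⟨v1, v2⟩ := v
    obtain ⟨w1, w2⟩ := w
    unfold lexc
    simp only
    by_cases e1 : u1 = v1
    · subst e1
      by_cases e2 : u1 = w1
      · subst e2
        simp only [if_true]
        exact h.norb u2 v2 w2 (by rintro rfl; exact huv rfl) (by rintro rfl; exact huw rfl)
          (by rintro rfl; exact hvw rfl)
      · simp [e2]
    · by_cases e2 : u1 = w1
      · subst e2
        rw [hb v1 u1]
        simp [e1, Ne.symm e1]
      · by_cases e3 : v1 = w1
        · subst e3; simp [e1]
        · simp only [e1, e2, e3, if_false]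
          cases b u1 v1 <;> cases b u1 w1 <;> cases b v1 w1 <;> simp
  · intro u v
    have := h.lo u.2 v.2
    unfold lexc
    split_ifs <;> omega
  · intro u v
    have := h.hi u.2 v.2
    unfold lexc
    split_ifs <;> omega
  · intro v
    simp [lexc, h.diag]
  · intro l hl a x y z h1 h2 h3 h4' h5 h6
    by_cases hlq : q + 2 ≤ l
    · exact h.k4 l hl _ _ _ _ (hsame hlq h1).2 (hsame hlq h2).2 (hsame hlq h3).2 (hsame hlq h4').2
        (hsame hlq h5).2 (hsame hlq h6).2
    · push Not at hlq
      have hlo : q ≤ l := by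
        have := h.lo a.2 x.2
        rw [← h1]; unfold lexc; split_ifs <;> omega
      refine h4 (by omega) _ a.1 x.1 y.1 z.1 (hdiff hlq h1).1 (hdiff hlq h2).1 (hdiff hlq h3).1
        (hdiff hlq h4').1 (hdiff hlq h5).1 (hdiff hlq h6).1 (hdiff hlq h1).2 (hdiff hlq h2).2
        (hdiff hlq h3).2 (hdiff hlq h4').2 (hdiff hlq h5).2 (hdiff hlq h6).2
  · intro l hl hl' x y z h1 h2 h3'
    by_cases hlq : q + 2 ≤ l
    · exact h.k3 l hl hl' _ _ _ (hsame hlq h1).2 (hsame hlq h2).2 (hsame hlq h3').2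
    · push Not at hlq
      exact h3 (by omega) _ x.1 y.1 z.1 (hdiff hlq h1).1 (hdiff hlq h2).1 (hdiff hlq h3').1
        (hdiff hlq h1).2 (hdiff hlq h2).2 (hdiff hlq h3').2
  · intro x y z hxy hxz hyz h1 h2
    obtain ⟨a1, a2⟩ := hsame hqs h1
    obtain ⟨b1, b2⟩ := hsame hqs h2
    exact h.p3 x.2 y.2 z.2 (fun e => hxy (Prod.ext a1 e)) (fun e => hxz (Prod.ext b1 e))
      (fun e => hyz (Prod.ext (a1.symm.trans b1) e)) a2 b2

def c5b : Fin 5 → Fin 5 → Bool := fun u v =>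
  Nat.beq (v - u).val 1 || Nat.beq (v - u).val 4

def p17b : Fin 17 → Fin 17 → Bool := fun u v =>
  Nat.beq (v - u).val 1 || Nat.beq (v - u).val 2 || Nat.beq (v - u).val 4 || Nat.beq (v - u).val 8 ||
  Nat.beq (v - u).val 9 || Nat.beq (v - u).val 13 || Nat.beq (v - u).val 15 || Nat.beq (v - u).val 16

theorem c5b_symm : ∀ u v, c5b u v = c5b v u := by decide
theorem c5b_free : ∀ e, ∀ x y z, x ≠ y → x ≠ z → y ≠ z →
      c5b x y = e → c5b x z = e → c5b y z = e → False := by decide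
theorem p17b_symm : ∀ u v, p17b u v = p17b v u := by decide +kernel

theorem p17b_aux : ∀ e, ∀ x : Fin 17, 0 ≠ x → p17b 0 x = e → ∀ y, 0 ≠ y → p17b 0 y = e →
    x ≠ y → p17b x y = e → ∀ z, 0 ≠ z → p17b 0 z = e → x ≠ z → p17b x z = e → 
    y ≠ z → p17b y z = e → False := by decide +kernel

theorem p17b_trans (a x y : Fin 17) : p17b (x - a) (y - a) = p17b x y := by
  have e : y - a - (x - a) = y - x := by abel
  unfold p17b; rw [e]

theorem p17b_free : ∀ e, ∀ a x y z, a ≠ x → a ≠ y → a ≠ z → x ≠ y → x ≠ z → y ≠ z →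
      p17b a x = e → p17b a y = e → p17b a z = e → p17b x y = e → p17b x z = e →
      p17b y z = e → False := by
  intro e a x y z h1 h2 h3 h4 h5 h6 g1 g2 g3 g4 g5 g6
  have t : ∀ x, p17b 0 (x - a) = p17b a x := by intro x; rw [← p17b_trans a a x, sub_self]
  have ne0 : ∀ {x}, a ≠ x → 0 ≠ x - a := fun h h' => h (sub_eq_zero.1 h'.symm).symm
  have ne1 : ∀ {x y : Fin 17}, x ≠ y → x - a ≠ y - a := fun h h' => h (sub_left_injective h')
  refine p17b_aux e (x - a) (ne0 h1) ?_ (y - a) (ne0 h2) ?_ (ne1 h4) ?_ (z - a) (ne0 h3) ?_ (ne1 h5) ?_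
    (ne1 h6) ?_
  · rw [t]; exact g1
  · rw [t]; exact g2
  · rw [p17b_trans]; exact g4
  · rw [t]; exact g3
  · rw [p17b_trans]; exact g5
  · rw [p17b_trans]; exact g6

/-- four vertices: a 4-cycle in color `q`, everything else in color `q + 1` -/
def base4 (q : ℕ) : Fin 4 → Fin 4 → ℕ := fun u v => if (u.val + v.val) % 2 = 1 then q else q + 1

theorem low_base (r s : ℕ) : Low r (s + 1) (r + s) (base4 (r + s)) := by
  refine ⟨?_, ?_, ?_, ?_, ?_, ?_, ?_, ?_⟩
  · intro u v; unfold base4; rw [add_comm u.val]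
  · intro u v w _ _ _; unfold base4; split_ifs <;> simp
  · intro u v; unfold base4; split_ifs <;> omega
  · intro u v; unfold base4; split_ifs <;> omega
  · intro v; unfold base4; split_ifs <;> omega
  · intro l hl a x _ _ h; unfold base4 at h; split_ifs at h <;> omega
  · intro l hl hl' x y z; unfold base4; split_ifs <;> omega
  · intro x y z hxy hxz hyz; unfold base4
    have := x.2
    have := y.2
    have := z.2
    split_ifs <;> omega

theorem low_exK (r s : ℕ) (m : ℕ) : 2 * m ≤ s → ∃ V : Type, ∃ _ : Fintype V, ∃ c : V → V → ℕ,
    Fintype.card V = 4 * 5 ^ m ∧ Low r (s + 1) (r + s - 2 * m) c := by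
  induction m with
  | zero => intro _; exact ⟨Fin 4, inferInstance, _, by simp, low_base r s⟩
  | succ m ih =>
    intro hm
    obtain ⟨V, _, c, hV, hc⟩ := ih (by omega)
    have e : r + s - 2 * m = (r + s - 2 * (m + 1)) + 2 := by omega
    rw [e] at hc
    refine ⟨Fin 5 × V, inferInstance, _, ?_, low_step hc c5b_symm ?_ (fun _ => c5b_free) ?_ ?_⟩
    · simp [hV, pow_succ]; ring
    · omega
    · omega
    · omega

theorem low_exH (r m n : ℕ) : 2 * m ≤ r → ∃ V : Type, ∃ _ : Fintype V, ∃ c : V → V → ℕ,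
    Fintype.card V = 4 * 5 ^ n * 17 ^ m ∧ Low r (2 * n + 1) (r - 2 * m) c := by
  induction m with
  | zero =>
    intro _
    obtain ⟨V, i, c, hV, hc⟩ := low_exK r (2 * n) n le_rfl
    exact ⟨V, i, c, by simpa using hV, by simpa using hc⟩
  | succ m ih =>
    intro hm
    obtain ⟨V, _, c, hV, hc⟩ := ih (by omega)
    have e : r - 2 * m = (r - 2 * (m + 1)) + 2 := by omega
    rw [e] at hc
    refine ⟨Fin 17 × V, inferInstance, _, ?_, low_step hc p17b_symm (fun _ => p17b_free) ?_ ?_ ?_⟩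
    · simp [hV, pow_succ]; ring
    · omega
    · omega
    · omega
end Lower
section Final

theorem copyH3 {n k : ℕ} {c : Fin n → Fin n → Fin k} (hs : ∀ u v, c u v = c v u) {l : Fin k}
    {b a x y z : Fin n} (hyz : y ≠ z) (h1 : (Gc c hs l).Adj b a) (h2 : (Gc c hs l).Adj b x)
    (h3 : (Gc c hs l).Adj b y) (h4 : (Gc c hs l).Adj b z) (h5 : (Gc c hs l).Adj a x)
    (h6 : (Gc c hs l).Adj a y) (h7 : (Gc c hs l).Adj a z) (h8 : (Gc c hs l).Adj x y)
    (h9 : (Gc c hs l).Adj x z) : HasMonoCopy GH3 c l := by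
  have g1 := h1.symm
  have g2 := h2.symm
  have g3 := h3.symm
  have g4 := h4.symm
  have g5 := h5.symm
  have g6 := h6.symm
  have g7 := h7.symm
  have g8 := h8.symm
  have g9 := h9.symm
  refine ⟨![y, z, b, a, x], ?_, ?_⟩
  · intro u v huv
    fin_cases u <;> fin_cases v <;> first
      | rfl
      | (exfalso; simp at huv; simp_all [Gc])
  · intro u v huv
    fin_cases u <;> fin_cases v <;> first
      | (exfalso; revert huv; simp [GH3]; done)
      | exact h1.2
      | exact h2.2
      | exact h3.2
      | exact h4.2
      | exact h5.2
      | exact h6.2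
      | exact h7.2
      | exact h8.2
      | exact h9.2
      | exact g1.2
      | exact g2.2
      | exact g3.2
      | exact g4.2
      | exact g5.2
      | exact g6.2
      | exact g7.2
      | exact g8.2
      | exact g9.2

theorem copyK3 {n k : ℕ} {c : Fin n → Fin n → Fin k} (hs : ∀ u v, c u v = c v u) {l : Fin k}
    {x y z : Fin n} (h1 : (Gc c hs l).Adj x y) (h2 : (Gc c hs l).Adj x z)
    (h3 : (Gc c hs l).Adj y z) : HasMonoCopy GK3 c l := by
  have g1 := h1.symm
  have g2 := h2.symm
  have g3 := h3.symm
  refine ⟨![x, y, z], ?_, ?_⟩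
  · intro u v huv
    fin_cases u <;> fin_cases v <;> first
      | rfl
      | (exfalso; simp at huv; simp_all [Gc])
  · intro u v huv
    fin_cases u <;> fin_cases v <;> first
      | (exfalso; revert huv; simp [GK3]; done)
      | exact h1.2
      | exact h2.2
      | exact h3.2
      | exact g1.2
      | exact g2.2
      | exact g3.2

theorem copyP3 {n k : ℕ} {c : Fin n → Fin n → Fin k} (hs : ∀ u v, c u v = c v u) {l : Fin k}
    {x y z : Fin n} (hyz : y ≠ z) (h1 : (Gc c hs l).Adj x y) (h2 : (Gc c hs l).Adj x z) :
    HasMonoCopy GP3 c l := by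
  have g1 := h1.symm
  have g2 := h2.symm
  refine ⟨![y, x, z], ?_, ?_⟩
  · intro u v huv
    fin_cases u <;> fin_cases v <;> first
      | rfl
      | (exfalso; simp at huv; simp_all [Gc])
  · intro u v huv
    fin_cases u <;> fin_cases v <;> first
      | (exfalso; revert huv; simp [GP3]; done)
      | exact h1.2
      | exact h2.2
      | exact g1.2
      | exact g2.2

theorem mix_H {k s r : ℕ} {i : Fin k} (h : i.val < r) : mixPKH k s r i = ⟨Fin 5, GH3⟩ := by
  simp [mixPKH, h]
theorem mix_K {k s r : ℕ} {i : Fin k} (h : ¬ i.val < r) (h' : i.val < r + s) :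
    mixPKH k s r i = ⟨Fin 3, GK3⟩ := by
  simp [mixPKH, h, h']
theorem mix_P {k s r : ℕ} {i : Fin k} (h : ¬ i.val < r) (h' : ¬ i.val < r + s) :
    mixPKH k s r i = ⟨Fin 3, GP3⟩ := by
  simp [mixPKH, h, h']

/-- the level of each color -/
def lev (k s r : ℕ) (i : Fin k) : ℕ := if i.val < r then 5 else if i.val < r + s then 4 else 3

theorem cnt_le_of_iff {k : ℕ} (v m : ℕ) (σ : Fin k → ℕ) (hm : m ≤ k) (h : ∀ i, σ i = v ↔ i.val < m) :
    cnt v σ = m := by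
  unfold cnt
  have e := (Fin.card_filter_val_lt (n := k) (m := m)).trans (min_eq_right hm)
  rw [← e]
  congr 1
  ext i
  rw [Finset.mem_filter, Finset.mem_filter, h]

theorem cnt_lev5 {k s r : ℕ} (h : s + r < k) : cnt 5 (lev k s r) = r := by
  apply cnt_le_of_iff _ _ _ (by omega)
  intro i
  unfold lev
  split_ifs <;> omega

theorem cnt_lev4 {k s r : ℕ} (h : s + r < k) : cnt 4 (lev k s r) = s := by
  classical
  have h1 : cnt 4 (lev k s r) + cnt 5 (lev k s r) = r + s := by
    have h2 : cnt 0 (fun i : Fin k => if i.val < r + s then 0 else 1) = r + s := by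
      apply cnt_le_of_iff _ _ _ (by omega)
      intro i
      split_ifs with hi <;> simp [hi]
    rw [← h2]
    unfold cnt
    rw [← Finset.card_union_of_disjoint]
    · congr 1
      ext i
      rw [Finset.mem_union, Finset.mem_filter, Finset.mem_filter, Finset.mem_filter]
      simp only [Finset.mem_univ, true_and]
      unfold lev
      split_ifs <;> simp <;> omega
    · rw [Finset.disjoint_left]
      intro i h1 h2
      rw [Finset.mem_filter] at h1 h2
      omega
  have := cnt_lev5 h
  omega

theorem upper {k s r n : ℕ} (hsr : s + r < k) (c : Fin n → Fin n → Fin k) (hc : IsGallaiColoring c)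
    (hno : ∀ i, ¬ HasMonoCopy (mixPKH k s r i).2 c i) : 5 * n ≤ GG r s := by
  obtain ⟨hs, hr⟩ := hc
  have hN : NoRb c := by
    intro u v w h1 h2 h3
    by_contra hcon
    simp only [not_or] at hcon
    exact hr ⟨u, v, w, h1, h2, h3, hcon⟩
  have := main_upper hs hN n Finset.univ (by simp) (lev k s r) (by
    intro l
    have hl := hno l
    unfold lev JF
    by_cases h1 : l.val < r
    · rw [mix_H h1] at hl
      simp only [h1, if_true]
      intro b _ a _ x _ y _ z _ hyz e1 e2 e3 e4 e5 e6 e7 e8 e9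
      exact hl (copyH3 hs hyz e1 e2 e3 e4 e5 e6 e7 e8 e9)
    · by_cases h2 : l.val < r + s
      · rw [mix_K h1 h2] at hl
        simp only [h1, h2, if_true, if_false]
        intro a _ x _ y _ z _ hyz e1 e2 e3 e4 e5
        exact hl (copyK3 hs e1 e2 e4)
      · rw [mix_P h1 h2] at hl
        simp only [h1, h2, if_false]
        intro x _ y _ z _ hyz e1 e2
        exact hl (copyP3 hs hyz e1 e2))
  rw [cnt_lev5 hsr, cnt_lev4 hsr] at this
  simpa using this

theorem lower {k r m a n : ℕ} (hr : r = 2 * m) (hk : (2 * a + 1) + r < k)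
    (hn : n ≤ 4 * 5 ^ a * 17 ^ m) :
    ∃ c : Fin n → Fin n → Fin k, IsGallaiColoring c ∧
      ∀ i, ¬ HasMonoCopy (mixPKH k (2 * a + 1) r i).2 c i := by
  obtain ⟨V, _, c, hV, hc⟩ := low_exH r m a (by omega)
  let g : Fin n → V := fun x => (Fintype.equivFinOfCardEq hV).symm (Fin.castLE hn x)
  have hg : Function.Injective g := fun x y h => Fin.castLE_injective hn ((Equiv.injective _) h)
  have hlt : ∀ u v, c u v < k := fun u v => by have := hc.hi u v; omega
  refine ⟨fun x y => ⟨c (g x) (g y), hlt _ _⟩, ⟨?_, ?_⟩, ?_⟩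
  · intro u v; simp only [hc.symm (g u) (g v)]
  · rintro ⟨u, v, w, h1, h2, h3, h4, h5, h6⟩
    simp only [ne_eq, Fin.mk.injEq] at h4 h5 h6
    rcases hc.norb (g u) (g v) (g w) (hg.ne h1) (hg.ne h2) (hg.ne h3) with h | h | h
    · exact h4 h
    · exact h5 h
    · exact h6 h
  · intro i hi
    by_cases h1 : i.val < r
    · rw [mix_H h1] at hi
      obtain ⟨f, hf, hfe⟩ := hi
      have e : ∀ u v, GH3.Adj u v → c (g (f u)) (g (f v)) = i.val := fun u v h => by
        rw [← hfe u v h]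
      exact hc.k4 i.val h1 (g (f 0)) (g (f 2)) (g (f 3)) (g (f 4)) (e _ _ (by simp [GH3])) 
        (e _ _ (by simp [GH3])) (e _ _ (by simp [GH3])) (e _ _ (by simp [GH3]))
        (e _ _ (by simp [GH3])) (e _ _ (by simp [GH3]))
    · by_cases h2 : i.val < r + (2 * a + 1)
      · rw [mix_K h1 h2] at hi
        obtain ⟨f, hf, hfe⟩ := hi
        have e : ∀ u v, GK3.Adj u v → c (g (f u)) (g (f v)) = i.val := fun u v h => by
          rw [← hfe u v h]
        exact hc.k3 i.val (by omega) h2 (g (f 0)) (g (f 1)) (g (f 2)) (e _ _ (by simp [GK3]))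
          (e _ _ (by simp [GK3])) (e _ _ (by simp [GK3]))
      · rw [mix_P h1 h2] at hi
        obtain ⟨f, hf, hfe⟩ := hi
        have e : ∀ u v, GP3.Adj u v → c (g (f u)) (g (f v)) = i.val := fun u v h => by
          rw [← hfe u v h]
        have e1 := e 1 0 (by simp [GP3])
        have e2 := e 1 2 (by simp [GP3])
        have hhi := hc.hi (g (f 1)) (g (f 0))
        have hii : i.val = r + (2 * a + 1) := by omega
        rw [hii] at e1 e2
        exact hc.p3 (g (f 1)) (g (f 0)) (g (f 2)) (fun h => absurd (hf (hg h)) (by decide))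
          (fun h => absurd (hf (hg h)) (by decide)) (fun h => absurd (hf (hg h)) (by decide)) e1 e2

end Final

/-- Theorem 1.5, case (b₄): s odd, r even and s + r < k implies
GR_k((k-s-r)P₃, sK₃, rH₃) = 4·5^((s-1)/2)·17^(r/2) + 1. -/
theorem GR_mixPKH_b4 (k s r : ℕ) (hk : 1 ≤ k) (hs : Odd s) (hr : Even r)
    (hsr : s + r < k) :
    GR k (mixPKH k s r) = 4 * 5 ^ ((s - 1) / 2) * 17 ^ (r / 2) + 1 := by

  obtain ⟨a, rfl⟩ := hs
  obtain ⟨m, hm⟩ := hr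
  have hm' : r = 2 * m := by omega
  have ea : (2 * a + 1 - 1) / 2 = a := by omega
  have em : r / 2 = m := by omega
  rw [ea, em]
  have hGG : GG r (2 * a + 1) = 20 * (17 ^ m * 5 ^ a) := by rw [hm', GG_eo]
  have hmul : 4 * 5 ^ a * 17 ^ m = 4 * (17 ^ m * 5 ^ a) := by ring
  apply le_antisymm
  · apply Nat.sInf_le
    intro c hc
    by_contra hno
    push Not at hno
    have := upper hsr c hc hno
    omega
  · by_contra hlt
    push Not at hlt
    have hne : {n : ℕ | ∀ c : Fin n → Fin n → Fin k, IsGallaiColoring c →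
        ∃ i : Fin k, HasMonoCopy (mixPKH k (2 * a + 1) r i).2 c i}.Nonempty := by
      refine ⟨4 * 5 ^ a * 17 ^ m + 1, ?_⟩
      intro c hc
      by_contra hno
      push Not at hno
      have := upper hsr c hc hno
      omega
    have hmem := Nat.sInf_mem hne
    obtain ⟨c, hc, hno⟩ := lower (n := GR k (mixPKH k (2 * a + 1) r)) hm' hsr (by omega)
    obtain ⟨i, hi⟩ := hmem c hc
    exact hno i hi
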